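/- arXiv:math/0401309 — 2 statements merged into one kernel-verified Lean document; each statement's English description precedes it below -/
import Mathlib

section
/- Let n ≥ 2, α ∈ (0,2), and let σ be the surface measure on the unit sphere S ⊆ ℝⁿ. Let u be α-harmonic in the open unit ball B and positive on B, and suppose there exists c > 0 such that 0 ≤ u(x) − ∫_{|v|>1} P(x,v) u(v) dv ≤ c (1−|x|)^{α/2−1} for all x ∈ B, where P is the α-stable Poisson kernel of the unit ball. Let h(x) := ∫_S M(x,w) σ(dw). Then there exists a Borel function φ : S → [0,∞) such that for σ-almost every z ∈ S and every β > 1 the limit of u(x)/h(x) as x → z with x ∈ A^β_z exists and equals φ(z), and u(x) = ∫_{|v|>1} P(x,v) u(v) dv + ∫_S M(x,w) φ(w) σ(dw) for every x ∈ B. -/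
open Metric Set MeasureTheory Filter

/-- The α-stable Poisson kernel of the ball `B(x₀, r)`. -/
noncomputable def stablePoissonKernel (n : ℕ) (α : ℝ) (x₀ : EuclideanSpace ℝ (Fin n))
    (r : ℝ) (x v : EuclideanSpace ℝ (Fin n)) : ℝ :=
  (Real.Gamma (n / 2) * Real.pi ^ (-(n : ℝ) / 2 - 1) * Real.sin (Real.pi * α / 2)) *
    ((r ^ 2 - dist x x₀ ^ 2) / (dist v x₀ ^ 2 - r ^ 2)) ^ (α / 2) *
    dist x v ^ (-(n : ℝ))

/-- `u : ℝⁿ → [0,∞)` Borel with `∫ u(x)(1+|x|)^{−n−α} dx < ∞` is α-harmonic in the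
open set `D` if, for every ball whose closure lies in `D` and every point `x` of the
ball, `∫_{|v−x₀|>r} P_{x₀,r}(x,v) u(v) dv` is finite and equals `u(x)`. -/
def IsAlphaHarmonic (n : ℕ) (α : ℝ) (D : Set (EuclideanSpace ℝ (Fin n)))
    (u : EuclideanSpace ℝ (Fin n) → ℝ) : Prop :=
  Measurable u ∧ (∀ x, 0 ≤ u x) ∧
    Integrable (fun x => u x * (1 + ‖x‖) ^ (-(n : ℝ) - α)) ∧
    ∀ (x₀ : EuclideanSpace ℝ (Fin n)) (r : ℝ), 0 < r → closedBall x₀ r ⊆ D →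
      ∀ x ∈ ball x₀ r,
        IntegrableOn (fun v => stablePoissonKernel n α x₀ r x v * u v)
          {v | r < dist v x₀} ∧
        ∫ v in {v | r < dist v x₀}, stablePoissonKernel n α x₀ r x v * u v = u x

/-- Martin kernel of the unit ball for the symmetric α-stable process, normalized at
the origin: `M(x,w) = (1−|x|²)^{α/2} |x−w|^{−n}`. -/
noncomputable def martinKernel (n : ℕ) (α : ℝ) (x w : EuclideanSpace ℝ (Fin n)) : ℝ :=
  (1 - ‖x‖ ^ 2) ^ (α / 2) * dist x w ^ (-(n : ℝ))

/-- Stolz open set of the unit ball at a boundary point `z`, with angle `β > 1`: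
`A^β_z = { y ∈ B : 1−|y| < 1/3 ∧ |y−z| < β(1−|y|) }`. -/
def stolzSet (n : ℕ) (β : ℝ) (z : EuclideanSpace ℝ (Fin n)) :
    Set (EuclideanSpace ℝ (Fin n)) :=
  {y | y ∈ ball (0 : EuclideanSpace ℝ (Fin n)) 1 ∧ 1 - ‖y‖ < 1 / 3 ∧
    dist y z < β * (1 - ‖y‖)}

/-!
Apply the mean value property of `u` on the balls `B(0, r)` and let `r` increase to `1`. The
contribution of `{‖v‖ > 1}` to the integral tends to the Poisson integral of `u`, and the Poisson
integral itself contributes nothing on the annuli `{r < ‖v‖ < 1}` in the limit, so the singular part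
`u x - ∫ P(x,v) u(v) dv` is the limit of the contributions of its own values on these annuli. The
growth bound on the singular part and a Beta integral in the radial variable show that the annulus
measures, projected radially to the sphere, are bounded by a fixed multiple of the surface measure
`σ`; the density `φ` of a weak `L²` limit of them represents the singular part as the Martin
integral of `φ`.

Hence `u x / (1 - ‖x‖²) ^ (α/2)` is the potential, for the kernel `‖x - w‖⁻ⁿ`, of `m + φ σ`, where
`m` lives outside the closed ball and so is singular to `σ`. Differentiating `m` and `φ σ` with
respect to `σ`, the nontangential limit of the quotient by the potential of `σ` is `φ` almost
everywhere. The regularity of the Hausdorff measure `σ` needed here, `σ (B(z, r)) ≈ r ^ (n - 1)`,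
comes from comparing it with the cone measure of the sphere by a mass distribution argument and a
Vitali covering.
-/

open scoped ENNReal NNReal Topology

section HausdorffMeasure

variable {X : Type*} [MetricSpace X]

lemma ediam_closedBall_le_two_mul_ofReal (x : X) {r : ℝ} (hr : 0 ≤ r) :
    ediam (closedBall x r) ≤ 2 * ENNReal.ofReal r := by
  rw [← closedEBall_ofReal hr]
  exact ediam_closedEBall_le

lemma exists_countable_disjoint_closedBall_cover [TopologicalSpace.SeparableSpace X] (A : Set X)
    {ε : ℝ} (hε : 0 < ε) :
    ∃ U ⊆ A, U.Countable ∧ U.PairwiseDisjoint (closedBall · ε) ∧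
      A ⊆ ⋃ b ∈ U, closedBall b (5 * ε) := by
  obtain ⟨U, hUA, hdisj, hcover⟩ :=
    Vitali.exists_disjoint_subfamily_covering_enlargement_closedBall A id (fun _ => ε) ε
      (fun _ _ => le_rfl) 5 (by norm_num)
  refine ⟨U, hUA, hdisj.countable_of_nonempty_interior fun a _ =>
    ⟨a, ball_subset_interior_closedBall (mem_ball_self hε)⟩, hdisj, fun a ha => ?_⟩
  obtain ⟨b, hb, hsub⟩ := hcover a ha
  exact mem_biUnion hb (hsub (mem_closedBall_self hε.le))

variable [MeasurableSpace X] {ν : Measure X} {S : Set X} {s : ℝ}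

lemma measure_le_mul_ediam_rpow {K : ℝ≥0∞} (hνS : ν Sᶜ = 0)
    (hball : ∀ z ∈ S, ∀ r, 0 ≤ r → ν (closedBall z r) ≤ K * ENNReal.ofReal r ^ s)
    {t : Set X} (ht : ediam t ≠ ∞) : ν t ≤ K * ediam t ^ s := by
  rcases (t ∩ S).eq_empty_or_nonempty with hempty | ⟨z, hzt, hzS⟩
  · exact (measure_mono_null (disjoint_iff_inter_eq_empty.2 hempty).subset_compl_right hνS).trans_le
      zero_le
  · have hsub : t ⊆ closedBall z (diam t) := fun y hy =>
      dist_le_diam_of_mem (isBounded_iff_ediam_ne_top.2 ht) hy hzt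
    simpa only [diam, ENNReal.ofReal_toReal ht] using
      (measure_mono hsub).trans (hball z hzS _ diam_nonneg)

variable [BorelSpace X]

lemma measure_le_smul_hausdorffMeasure_restrict {K : ℝ≥0} (hK : K ≠ 0) (hνS : ν Sᶜ = 0)
    (hball : ∀ z ∈ S, ∀ r, 0 ≤ r → ν (closedBall z r) ≤ K * ENNReal.ofReal r ^ s) :
    ν ≤ K • (μH[s] : Measure X).restrict S := by
  have hscaled : K⁻¹ • ν ≤ μH[s] := by
    refine Measure.le_hausdorffMeasure _ _ 1 one_pos fun t ht => ?_
    have hfin : ediam t ≠ ∞ := (ht.trans_lt ENNReal.one_lt_top).ne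
    rw [Measure.smul_apply, ENNReal.smul_def, smul_eq_mul, ENNReal.coe_inv hK, mul_comm,
      ← div_eq_mul_inv]
    exact ENNReal.div_le_of_le_mul' (measure_le_mul_ediam_rpow hνS hball hfin)
  calc ν = K • (K⁻¹ • ν).restrict S := by
        rw [Measure.restrict_smul, smul_smul, mul_inv_cancel₀ hK, one_smul,
          Measure.restrict_eq_self_of_ae_mem (mem_ae_iff.2 hνS)]
    _ ≤ K • (μH[s] : Measure X).restrict S := by
        gcongr

lemma mul_tsum_ediam_rpow_le {k : ℝ≥0∞} (hs : 0 ≤ s) {U : Set X} (hU : U.Countable) {ε : ℝ}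
    (hε : 0 ≤ ε) (hdisj : U.PairwiseDisjoint (closedBall · ε))
    (hball : ∀ z ∈ U, k * ENNReal.ofReal ε ^ s ≤ ν (closedBall z ε)) :
    k * ∑' z : U, ediam (closedBall (z : X) (5 * ε)) ^ s ≤
      10 ^ s * ν (⋃ z ∈ U, closedBall z ε) := by
  rw [measure_biUnion hU hdisj fun _ _ => measurableSet_closedBall, ← ENNReal.tsum_mul_left,
    ← ENNReal.tsum_mul_left]
  refine ENNReal.tsum_le_tsum fun z => ?_
  have hdiam : ediam (closedBall (z : X) (5 * ε)) ≤ 10 * ENNReal.ofReal ε := by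
    refine (ediam_closedBall_le_two_mul_ofReal _ (by positivity)).trans_eq ?_
    rw [ENNReal.ofReal_mul (by norm_num), ENNReal.ofReal_ofNat, ← mul_assoc]
    norm_num
  calc k * ediam (closedBall (z : X) (5 * ε)) ^ s
      ≤ k * (10 * ENNReal.ofReal ε) ^ s := by gcongr
    _ = 10 ^ s * (k * ENNReal.ofReal ε ^ s) := by rw [ENNReal.mul_rpow_of_nonneg _ _ hs]; ring
    _ ≤ 10 ^ s * ν (closedBall z ε) := by gcongr; exact hball z z.2

lemma mul_hausdorffMeasure_le_measure_cthickening [TopologicalSpace.SeparableSpace X]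
    {k : ℝ≥0∞} (hk : k ≠ ∞) (hs : 0 ≤ s) {A : Set X} {R δ : ℝ} (hR : 0 < R) (hδ : 0 < δ)
    (hball : ∀ z ∈ A, ∀ r, 0 < r → r ≤ R → k * ENNReal.ofReal r ^ s ≤ ν (closedBall z r)) :
    k * μH[s] A ≤ 10 ^ s * ν (cthickening δ A) := by
  set ε : ℕ → ℝ := fun j => min R δ * (1 / ((j : ℝ) + 1)) with hε
  have hε_pos (j) : 0 < ε j := by have := lt_min hR hδ; positivity
  have hε_le (j) : ε j ≤ min R δ := by
    refine mul_le_of_le_one_right (lt_min hR hδ).le ?_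
    rw [div_le_one (by positivity)]
    linarith [j.cast_nonneg (α := ℝ)]
  have hε_lim : Tendsto (fun j => 2 * ENNReal.ofReal (5 * ε j)) atTop (𝓝 0) := by
    simpa [hε] using ENNReal.Tendsto.const_mul (ENNReal.tendsto_ofReal
      (((tendsto_one_div_add_atTop_nhds_zero_nat (𝕜 := ℝ)).const_mul (min R δ)).const_mul 5))
      (.inr ENNReal.ofNat_ne_top)
  choose U hUA hUc hUd hUcover using fun j =>
    exists_countable_disjoint_closedBall_cover A (hε_pos j)
  have hUcountable (j) : Countable (U j) := (hUc j).to_subtype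
  have hliminf := Measure.hausdorffMeasure_le_liminf_tsum s A (l := atTop) _ hε_lim
    (fun j (z : U j) => closedBall (z : X) (5 * ε j))
    (.of_forall fun j z => ediam_closedBall_le_two_mul_ofReal _ (by linarith [hε_pos j]))
    (.of_forall fun j => (hUcover j).trans_eq (biUnion_eq_iUnion _ _))
  calc k * μH[s] A
      ≤ k * liminf (fun j => ∑' z : U j, ediam (closedBall (z : X) (5 * ε j)) ^ s) atTop := by
        gcongr
    _ = liminf (fun j => k * ∑' z : U j, ediam (closedBall (z : X) (5 * ε j)) ^ s) atTop :=
        (ENNReal.liminf_const_mul_of_ne_top hk).symm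
    _ ≤ 10 ^ s * ν (cthickening δ A) := by
        refine liminf_le_of_frequently_le' (.of_forall fun j => ?_)
        refine (mul_tsum_ediam_rpow_le hs (hUc j) (hε_pos j).le (hUd j) fun z hz =>
          hball z (hUA j hz) _ (hε_pos j) ((hε_le j).trans (min_le_left _ _))).trans ?_
        gcongr
        exact iUnion₂_subset fun z hz =>
          (closedBall_subset_closedBall ((hε_le j).trans (min_le_right _ _))).trans
            (closedBall_subset_cthickening (hUA j hz) δ)

end HausdorffMeasure

section BallGrowth

variable {X : Type*} [PseudoMetricSpace X]

lemma exists_pow_two_mul_near {δ t : ℝ} (hδ : 0 < δ) (ht : 0 ≤ t) :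
    ∃ j : ℕ, 2 ^ j * δ ≤ δ + t ∧ t ≤ 2 ^ (j + 1) * δ := by
  rcases lt_or_ge t δ with htδ | htδ
  · exact ⟨0, by simpa using ht, by rw [zero_add, pow_one]; linarith⟩
  · obtain ⟨j, hlow, hup⟩ :=
      exists_nat_pow_near (x := t / δ) (y := 2) ((one_le_div hδ).2 htδ) one_lt_two
    rw [le_div_iff₀ hδ] at hlow
    rw [div_lt_iff₀ hδ] at hup
    exact ⟨j, by linarith, hup.le⟩

lemma ofReal_inv_add_dist_pow_le_tsum (n : ℕ) {δ : ℝ} (hδ : 0 < δ) (v z : X) :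
    ENNReal.ofReal ((δ + dist v z) ^ n)⁻¹ ≤
      ∑' j : ℕ, ENNReal.ofReal ((2 ^ j * δ) ^ n)⁻¹ *
        (closedBall z (2 ^ (j + 1) * δ)).indicator 1 v := by
  obtain ⟨j, hlow, hup⟩ := exists_pow_two_mul_near hδ (dist_nonneg (x := v) (y := z))
  refine le_trans ?_ (ENNReal.le_tsum j)
  rw [indicator_of_mem (mem_closedBall.2 hup), Pi.one_apply, mul_one]
  gcongr

variable [MeasurableSpace X] [OpensMeasurableSpace X] {m : Measure X} {z : X} {n : ℕ}

lemma lintegral_inv_add_dist_pow_le (hn : n ≠ 0) {K : ℝ≥0∞}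
    (hball : ∀ r, 0 < r → m (closedBall z r) ≤ K * ENNReal.ofReal r ^ (n - 1))
    {δ : ℝ} (hδ : 0 < δ) :
    ∫⁻ v, ENNReal.ofReal ((δ + dist v z) ^ n)⁻¹ ∂m ≤ K * ENNReal.ofReal (2 ^ n / δ) := by
  obtain ⟨d, rfl⟩ := Nat.exists_eq_succ_of_ne_zero hn
  have hind (j : ℕ) : Measurable ((closedBall z (2 ^ (j + 1) * δ)).indicator (1 : X → ℝ≥0∞)) :=
    measurable_one.indicator measurableSet_closedBall
  have hshell (j : ℕ) : ((2 ^ j * δ) ^ (d + 1))⁻¹ * (2 ^ (j + 1) * δ) ^ d =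
      2 ^ d / δ * (1 / 2) ^ j := by
    rw [pow_succ 2 j, mul_right_comm, mul_pow _ (2 : ℝ), pow_succ _ d, one_div, inv_pow]
    field_simp
  calc ∫⁻ v, ENNReal.ofReal ((δ + dist v z) ^ (d + 1))⁻¹ ∂m
      ≤ ∫⁻ v, ∑' j : ℕ, ENNReal.ofReal ((2 ^ j * δ) ^ (d + 1))⁻¹ *
          (closedBall z (2 ^ (j + 1) * δ)).indicator 1 v ∂m :=
        lintegral_mono fun v => ofReal_inv_add_dist_pow_le_tsum _ hδ v z
    _ = ∑' j : ℕ, ENNReal.ofReal ((2 ^ j * δ) ^ (d + 1))⁻¹ *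
          m (closedBall z (2 ^ (j + 1) * δ)) := by
        rw [lintegral_tsum fun j => ((hind j).const_mul _).aemeasurable]
        simp only [lintegral_const_mul _ (hind _), lintegral_indicator_one measurableSet_closedBall]
    _ ≤ ∑' j : ℕ, ENNReal.ofReal ((2 ^ j * δ) ^ (d + 1))⁻¹ *
          (K * ENNReal.ofReal (2 ^ (j + 1) * δ) ^ d) := by
        gcongr with j
        exact hball _ (by positivity)
    _ = ∑' j : ℕ, K * ENNReal.ofReal (2 ^ d / δ * (1 / 2) ^ j) := by
        refine tsum_congr fun j => ?_
        rw [mul_left_comm, ← ENNReal.ofReal_pow (by positivity),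
          ← ENNReal.ofReal_mul (by positivity), hshell]
    _ = K * ENNReal.ofReal (2 ^ (d + 1) / δ) := by
        rw [ENNReal.tsum_mul_left, ← ENNReal.ofReal_tsum_of_nonneg (fun j => by positivity)
          (summable_geometric_two.mul_left _), tsum_mul_left, tsum_geometric_two, pow_succ,
          mul_div_right_comm]

lemma mul_setLIntegral_closedBall_inv_add_dist_pow_le (hn : n ≠ 0) {K : ℝ≥0∞} {s : ℝ} (hs : 0 < s)
    (hball : ∀ r, 0 < r → r ≤ s → m (closedBall z r) ≤ K * ENNReal.ofReal r ^ (n - 1))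
    {δ : ℝ} (hδ : 0 < δ) :
    ENNReal.ofReal δ * ∫⁻ v in closedBall z s, ENNReal.ofReal ((δ + dist v z) ^ n)⁻¹ ∂m ≤
      K * 2 ^ n := by
  have hrestrict (r : ℝ) (hr : 0 < r) :
      m.restrict (closedBall z s) (closedBall z r) ≤ K * ENNReal.ofReal r ^ (n - 1) := by
    rw [Measure.restrict_apply measurableSet_closedBall]
    rcases le_total r s with hrs | hsr
    · exact (measure_mono inter_subset_left).trans (hball r hr hrs)
    · refine ((measure_mono inter_subset_right).trans (hball s hs le_rfl)).trans ?_
      gcongr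
  calc _ ≤ ENNReal.ofReal δ * (K * ENNReal.ofReal (2 ^ n / δ)) := by
        gcongr
        exact lintegral_inv_add_dist_pow_le hn hrestrict hδ
    _ = K * 2 ^ n := by
        rw [mul_left_comm, ← ENNReal.ofReal_mul hδ.le, mul_div_cancel₀ _ hδ.ne',
          ENNReal.ofReal_pow zero_le_two, ENNReal.ofReal_ofNat]

lemma setLIntegral_compl_closedBall_inv_add_dist_pow_le {s δ : ℝ} (hs : 0 < s) (hs1 : s ≤ 1)
    (hδ : 0 < δ) :
    ∫⁻ v in (closedBall z s)ᶜ, ENNReal.ofReal ((δ + dist v z) ^ n)⁻¹ ∂m ≤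
      ENNReal.ofReal ((2 / s) ^ n) * ∫⁻ v, ENNReal.ofReal ((1 + dist v z) ^ n)⁻¹ ∂m := by
  rw [← lintegral_const_mul _ (by fun_prop)]
  refine (setLIntegral_mono' measurableSet_closedBall.compl fun v hv => ?_).trans
    (setLIntegral_le_lintegral _ _)
  have hsv : s < dist v z := by simpa using hv
  rw [← ENNReal.ofReal_mul (by positivity), ← inv_pow, ← inv_pow, ← mul_pow]
  have : (δ + dist v z)⁻¹ ≤ 2 / s * (1 + dist v z)⁻¹ := by
    rw [← div_eq_mul_inv, div_div, inv_eq_one_div, div_le_div_iff₀ (by positivity) (by positivity)]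
    nlinarith
  gcongr

lemma tendsto_mul_lintegral_inv_add_dist_pow_zero (hn : n ≠ 0)
    (hfin : ∫⁻ v, ENNReal.ofReal ((1 + dist v z) ^ n)⁻¹ ∂m ≠ ∞)
    (hdens : ∀ ε : ℝ≥0∞, 0 < ε →
      ∀ᶠ r in 𝓝[>] (0 : ℝ), m (closedBall z r) ≤ ε * ENNReal.ofReal r ^ (n - 1)) :
    Tendsto (fun δ : ℝ => ENNReal.ofReal δ *
      ∫⁻ v, ENNReal.ofReal ((δ + dist v z) ^ n)⁻¹ ∂m) (𝓝[>] 0) (𝓝 0) := by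
  refine ENNReal.tendsto_nhds_zero.2 fun η hη => ?_
  have hη2 : 0 < η / 2 := ENNReal.half_pos hη.ne'
  have hε : 0 < η / 2 / 2 ^ n := ENNReal.div_pos hη2.ne' (by finiteness)
  obtain ⟨r₀, hr₀, hsmall⟩ := mem_nhdsGT_iff_exists_Ioc_subset.1 (hdens _ hε)
  set s := min r₀ 1
  have hs : 0 < s := lt_min hr₀ one_pos
  have hfar : Tendsto (fun δ : ℝ => ENNReal.ofReal δ * (ENNReal.ofReal ((2 / s) ^ n) *
      ∫⁻ v, ENNReal.ofReal ((1 + dist v z) ^ n)⁻¹ ∂m)) (𝓝[>] 0) (𝓝 0) := by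
    have hofReal : Tendsto ENNReal.ofReal (𝓝[>] 0) (𝓝 0) := by
      simpa using (ENNReal.continuous_ofReal.tendsto 0).mono_left nhdsWithin_le_nhds
    simpa using ENNReal.Tendsto.mul_const hofReal
      (.inr (ENNReal.mul_ne_top ENNReal.ofReal_ne_top hfin))
  filter_upwards [ENNReal.tendsto_nhds_zero.1 hfar _ hη2, self_mem_nhdsWithin] with δ hδfar hδ
  rw [← lintegral_add_compl _ (measurableSet_closedBall (x := z) (ε := s)), mul_add,
    ← ENNReal.add_halves η]
  gcongr
  · calc _ ≤ η / 2 / 2 ^ n * 2 ^ n := mul_setLIntegral_closedBall_inv_add_dist_pow_le hn hs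
          (fun r hr hrs => hsmall ⟨hr, hrs.trans (min_le_left _ _)⟩) hδ
      _ = η / 2 := ENNReal.div_mul_cancel (by simp) (by finiteness)
  · refine le_trans ?_ hδfar
    gcongr
    exact setLIntegral_compl_closedBall_inv_add_dist_pow_le hs (min_le_right _ _) hδ

end BallGrowth

section PolarCoordinates

variable {E : Type*} [NormedAddCommGroup E] [NormedSpace ℝ E]

lemma smul_mem_closedBall_two_mul {z θ : E} {r ρ : ℝ} (hθ : ‖θ‖ = 1) (hθz : θ ∈ closedBall z r)
    (hρ : ρ ∈ Icc 1 (1 + r)) : ρ • θ ∈ closedBall z (2 * r) := by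
  have hradial : dist (ρ • θ) θ = ρ - 1 := by
    rw [dist_eq_norm, show ρ • θ - θ = (ρ - 1) • θ by module, norm_smul, hθ, mul_one,
      Real.norm_of_nonneg (sub_nonneg.2 hρ.1)]
  rw [mem_closedBall] at hθz ⊢
  linarith [dist_triangle (ρ • θ) θ z, hρ.2]

lemma mem_closedBall_two_mul_of_smul_mem {z θ : E} {r ρ : ℝ} (hz : ‖z‖ = 1) (hθ : ‖θ‖ = 1)
    (hρ : 0 < ρ) (h : ρ • θ ∈ ball z r) :
    ρ ∈ Ioo (1 - r) (1 + r) ∧ θ ∈ closedBall z (2 * r) := by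
  have hradial : |ρ - 1| < r := by
    calc |ρ - 1| = |‖ρ • θ‖ - ‖z‖| := by rw [norm_smul, hθ, hz, mul_one, Real.norm_of_nonneg hρ.le]
      _ ≤ ‖ρ • θ - z‖ := abs_norm_sub_norm_le _ _
      _ < r := mem_ball_iff_norm.1 h
  have hproj : dist θ (ρ • θ) = |ρ - 1| := by
    rw [dist_eq_norm, show θ - ρ • θ = (1 - ρ) • θ by module, norm_smul, hθ, mul_one,
      Real.norm_eq_abs, abs_sub_comm]
  refine ⟨?_, ?_⟩
  · rw [abs_lt] at hradial
    constructor <;> linarith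
  · rw [mem_closedBall]
    linarith [dist_triangle θ (ρ • θ) z, mem_ball.1 h]

variable [MeasurableSpace E]

/-- The cone measure of `μ` on the unit sphere, i.e. `μ.toSphere` viewed as a measure on the
ambient space; it is the angular part of `μ` in polar coordinates. -/
noncomputable def coneMeasure (μ : Measure E) : Measure E :=
  μ.toSphere.map (↑)

variable [BorelSpace E] (μ : Measure E)

lemma coneMeasure_compl_sphere : coneMeasure μ (sphere 0 1)ᶜ = 0 := by
  rw [coneMeasure, Measure.map_apply measurable_subtype_coe isClosed_sphere.measurableSet.compl,
    preimage_compl, Subtype.coe_preimage_self, compl_univ, measure_empty]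

lemma ae_norm_eq_one_coneMeasure : ∀ᵐ θ ∂(coneMeasure μ), ‖θ‖ = 1 := by
  filter_upwards [mem_ae_iff.2 (coneMeasure_compl_sphere μ)] with θ hθ
  exact mem_sphere_zero_iff_norm.1 hθ

variable [FiniteDimensional ℝ E] [μ.IsAddHaarMeasure]

local notation "dim" => Module.finrank ℝ

instance isFiniteMeasure_coneMeasure : IsFiniteMeasure (coneMeasure μ) := by
  unfold coneMeasure
  infer_instance

variable [Nontrivial E]

lemma lintegral_eq_lintegral_coneMeasure {f : E → ℝ≥0∞} (hf : Measurable f) :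
    ∫⁻ x, f x ∂μ = ∫⁻ ρ in Ioi (0 : ℝ), ENNReal.ofReal (ρ ^ (dim E - 1)) *
      ∫⁻ θ, f (ρ • θ) ∂(coneMeasure μ) := by
  set e := homeomorphUnitSphereProd E
  have hfe : Measurable fun p => f (e.symm p) :=
    hf.comp (measurable_subtype_coe.comp e.symm.continuous.measurable)
  have hangular (ρ : ℝ) : ∫⁻ θ : sphere (0 : E) 1, f (ρ • (θ : E)) ∂μ.toSphere =
      ∫⁻ θ, f (ρ • θ) ∂(coneMeasure μ) :=
    (lintegral_map (hf.comp (measurable_const_smul ρ)) measurable_subtype_coe).symm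
  have hradial : Measurable fun ρ : Ioi (0 : ℝ) => ∫⁻ θ, f ((ρ : ℝ) • θ) ∂(coneMeasure μ) :=
    (Measurable.lintegral_prod_right' (f := fun p : ℝ × E => f (p.1 • p.2))
      (hf.comp measurable_smul)).comp measurable_subtype_coe
  calc ∫⁻ x, f x ∂μ = ∫⁻ x : ({0}ᶜ : Set E), f x ∂(μ.comap (↑)) := by
        rw [lintegral_subtype_comap (measurableSet_singleton _).compl, restrict_compl_singleton]
    _ = ∫⁻ p, f (e.symm p) ∂(μ.toSphere.prod (Measure.volumeIoiPow (dim E - 1))) := by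
        rw [← μ.measurePreserving_homeomorphUnitSphereProd.lintegral_comp hfe]
        simp only [e, Homeomorph.symm_apply_apply]
    _ = ∫⁻ ρ, ∫⁻ θ, f ((ρ : ℝ) • θ) ∂(coneMeasure μ) ∂(Measure.volumeIoiPow (dim E - 1)) := by
        rw [lintegral_prod_symm' _ hfe]
        simp only [e, homeomorphUnitSphereProd_symm_apply_coe, hangular]
    _ = _ := by
        rw [Measure.volumeIoiPow, lintegral_withDensity_eq_lintegral_mul _ (by fun_prop)
          hradial, ← lintegral_subtype_comap measurableSet_Ioi]
        rfl

lemma measure_eq_lintegral_coneMeasure {A : Set E} (hA : MeasurableSet A) :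
    μ A = ∫⁻ ρ in Ioi (0 : ℝ), ENNReal.ofReal (ρ ^ (dim E - 1)) *
      coneMeasure μ ((ρ • ·) ⁻¹' A) := by
  rw [← lintegral_indicator_one hA,
    lintegral_eq_lintegral_coneMeasure μ (measurable_one.indicator hA)]
  congr! with ρ
  exact lintegral_indicator_one (measurable_const_smul ρ hA)

lemma ofReal_mul_coneMeasure_closedBall_le {z : E} (r : ℝ) :
    ENNReal.ofReal r * coneMeasure μ (closedBall z r) ≤ μ (closedBall z (2 * r)) := by
  calc ENNReal.ofReal r * coneMeasure μ (closedBall z r)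
      = ∫⁻ _ in Ioo (1 : ℝ) (1 + r), coneMeasure μ (closedBall z r) := by
        rw [setLIntegral_const, Real.volume_Ioo, mul_comm, add_sub_cancel_left]
    _ ≤ ∫⁻ ρ in Ioo (1 : ℝ) (1 + r), ENNReal.ofReal (ρ ^ (dim E - 1)) *
          coneMeasure μ ((ρ • ·) ⁻¹' closedBall z (2 * r)) := by
        refine setLIntegral_mono' measurableSet_Ioo fun ρ hρ => ?_
        refine le_mul_of_one_le_of_le (ENNReal.one_le_ofReal.2 (one_le_pow₀ hρ.1.le))
          (measure_mono_ae ?_)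
        filter_upwards [ae_norm_eq_one_coneMeasure μ] with θ hθ hθz
        exact smul_mem_closedBall_two_mul hθ hθz (Ioo_subset_Icc_self hρ)
    _ ≤ μ (closedBall z (2 * r)) := by
        rw [measure_eq_lintegral_coneMeasure μ measurableSet_closedBall]
        exact lintegral_mono_set fun ρ hρ => one_pos.trans hρ.1

lemma measure_ball_le_mul_coneMeasure_closedBall {z : E} (hz : ‖z‖ = 1) {r : ℝ} (hr : r ≤ 1) :
    μ (ball z r) ≤
      2 ^ (dim E - 1) * ENNReal.ofReal (2 * r) * coneMeasure μ (closedBall z (2 * r)) := by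
  have hslice (ρ : ℝ) (hρ : 0 < ρ) :
      ENNReal.ofReal (ρ ^ (dim E - 1)) * coneMeasure μ ((ρ • ·) ⁻¹' ball z r) ≤
        (Ioo (1 - r) (1 + r)).indicator
          (fun _ => 2 ^ (dim E - 1) * coneMeasure μ (closedBall z (2 * r))) ρ := by
    by_cases hmem : ρ ∈ Ioo (1 - r) (1 + r)
    · rw [indicator_of_mem hmem]
      refine mul_le_mul' ?_ (measure_mono_ae ?_)
      · rw [ENNReal.ofReal_pow hρ.le]
        gcongr
        exact ENNReal.ofReal_le_ofNat.2 (by linarith [hmem.2])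
      · filter_upwards [ae_norm_eq_one_coneMeasure μ] with θ hθ h
        exact (mem_closedBall_two_mul_of_smul_mem hz hθ hρ h).2
    · rw [indicator_of_notMem hmem, nonpos_iff_eq_zero, mul_eq_zero]
      right
      rw [measure_eq_zero_iff_ae_notMem]
      filter_upwards [ae_norm_eq_one_coneMeasure μ] with θ hθ h
      exact hmem (mem_closedBall_two_mul_of_smul_mem hz hθ hρ h).1
  rw [measure_eq_lintegral_coneMeasure μ measurableSet_ball]
  refine (setLIntegral_mono' measurableSet_Ioi hslice).trans ?_
  refine (setLIntegral_le_lintegral _ _).trans_eq ?_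
  rw [lintegral_indicator measurableSet_Ioo, setLIntegral_const, Real.volume_Ioo,
    add_sub_sub_cancel, ← two_mul, mul_right_comm]

lemma coneMeasure_closedBall_le_of_pos (z : E) {r : ℝ} (hr : 0 < r) :
    coneMeasure μ (closedBall z r) ≤ 2 ^ dim E * μ (ball 0 1) * ENNReal.ofReal r ^ (dim E - 1) := by
  have hsector := ofReal_mul_coneMeasure_closedBall_le μ (z := z) r
  rw [Measure.addHaar_closedBall μ _ (by positivity), mul_pow, ENNReal.ofReal_mul (by positivity),
    ENNReal.ofReal_pow zero_le_two, ENNReal.ofReal_ofNat, ENNReal.ofReal_pow hr.le] at hsector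
  refine (ENNReal.mul_le_mul_iff_right (by simpa using hr) ENNReal.ofReal_ne_top).1
    (hsector.trans_eq ?_)
  rw [← mul_pow_sub_one Module.finrank_pos.ne' (ENNReal.ofReal r)]
  ring

lemma coneMeasure_closedBall_le (z : E) {r : ℝ} (hr : 0 ≤ r) :
    coneMeasure μ (closedBall z r) ≤ 2 ^ dim E * μ (ball 0 1) * ENNReal.ofReal r ^ (dim E - 1) := by
  have hfin : 2 ^ dim E * μ (ball 0 1) ≠ ∞ :=
    ENNReal.mul_ne_top (by finiteness) measure_ball_lt_top.ne
  have hlim : Tendsto (fun t => 2 ^ dim E * μ (ball 0 1) * ENNReal.ofReal t ^ (dim E - 1))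
      (𝓝[>] r) (𝓝 (2 ^ dim E * μ (ball 0 1) * ENNReal.ofReal r ^ (dim E - 1))) :=
    (ENNReal.Tendsto.const_mul (((ENNReal.continuous_pow _).comp
      ENNReal.continuous_ofReal).tendsto r) (.inr hfin)).mono_left nhdsWithin_le_nhds
  refine ge_of_tendsto hlim ?_
  filter_upwards [self_mem_nhdsWithin] with t (ht : r < t)
  exact (measure_mono (closedBall_subset_closedBall ht.le)).trans
    (coneMeasure_closedBall_le_of_pos μ z (hr.trans_lt ht))

lemma mul_ofReal_pow_le_coneMeasure_closedBall {z : E} (hz : ‖z‖ = 1) {r : ℝ} (hr : 0 < r)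
    (hr2 : r ≤ 2) :
    μ (ball 0 1) * ENNReal.ofReal r ^ (dim E - 1) ≤ 4 ^ dim E * coneMeasure μ (closedBall z r) := by
  have hsector := measure_ball_le_mul_coneMeasure_closedBall μ hz (r := r / 2) (by linarith)
  have hhalf : ENNReal.ofReal r = 2 * ENNReal.ofReal (r / 2) := by
    rw [← ENNReal.ofReal_ofNat, ← ENNReal.ofReal_mul zero_le_two, mul_div_cancel₀ r two_ne_zero]
  rw [Measure.addHaar_ball μ _ (by positivity), mul_div_cancel₀ r two_ne_zero,
    ENNReal.ofReal_pow (by positivity)] at hsector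
  refine (ENNReal.mul_le_mul_iff_right (by simpa using hr) ENNReal.ofReal_ne_top).1 ?_
  calc ENNReal.ofReal r * (μ (ball 0 1) * ENNReal.ofReal r ^ (dim E - 1))
      = 2 ^ dim E * (ENNReal.ofReal (r / 2) ^ dim E * μ (ball 0 1)) := by
        rw [mul_left_comm, mul_pow_sub_one Module.finrank_pos.ne', hhalf, mul_pow]
        ring
    _ ≤ 2 ^ dim E * (2 ^ dim E * ENNReal.ofReal r * coneMeasure μ (closedBall z r)) := by
        refine mul_le_mul' le_rfl (hsector.trans ?_)
        gcongr
        · exact one_le_two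
        · exact Nat.sub_le _ _
    _ = ENNReal.ofReal r * (4 ^ dim E * coneMeasure μ (closedBall z r)) := by
        rw [show (4 : ℝ≥0∞) = 2 * 2 by norm_num, mul_pow]
        ring

end PolarCoordinates

section SurfaceMeasure

variable (E : Type*) [NormedAddCommGroup E] [NormedSpace ℝ E] [MeasurableSpace E] [BorelSpace E]

local notation "dim" => Module.finrank ℝ

/-- The surface measure on the unit sphere of `E`, as a measure on the ambient space: the
restriction of the Hausdorff measure of codimension one. -/
noncomputable def surfaceMeasure : Measure E :=
  μH[(dim E : ℝ) - 1].restrict (sphere 0 1)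

lemma ae_norm_eq_one_surfaceMeasure : ∀ᵐ θ ∂(surfaceMeasure E), ‖θ‖ = 1 := by
  filter_upwards [ae_restrict_mem isClosed_sphere.measurableSet] with θ hθ
  exact mem_sphere_zero_iff_norm.1 hθ

lemma rpow_natCast_sub_one (x : ℝ≥0∞) {n : ℕ} (hn : n ≠ 0) : x ^ ((n : ℝ) - 1) = x ^ (n - 1) := by
  rw [← ENNReal.rpow_natCast, Nat.cast_pred (Nat.pos_of_ne_zero hn)]

variable {E} [FiniteDimensional ℝ E] [Nontrivial E]

lemma exists_coneMeasure_le_smul_surfaceMeasure (μ : Measure E) [μ.IsAddHaarMeasure] :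
    ∃ K : ℝ≥0, K ≠ 0 ∧ coneMeasure μ ≤ K • surfaceMeasure E := by
  have hfin : 2 ^ dim E * μ (ball 0 1) ≠ ∞ :=
    ENNReal.mul_ne_top (by finiteness) measure_ball_lt_top.ne
  have hpos : 2 ^ dim E * μ (ball 0 1) ≠ 0 :=
    mul_ne_zero (by positivity) (measure_ball_pos μ _ one_pos).ne'
  have hK : (2 ^ dim E * μ (ball 0 1)).toNNReal ≠ 0 := ENNReal.toNNReal_ne_zero.2 ⟨hpos, hfin⟩
  refine ⟨_, hK, measure_le_smul_hausdorffMeasure_restrict hK (coneMeasure_compl_sphere μ)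
    fun z _ r hr => ?_⟩
  rw [ENNReal.coe_toNNReal hfin, rpow_natCast_sub_one _ Module.finrank_pos.ne']
  exact coneMeasure_closedBall_le μ z hr

lemma exists_surfaceMeasure_closedBall_le :
    ∃ K : ℝ≥0, ∀ (z : E) (r : ℝ), 0 < r →
      surfaceMeasure E (closedBall z r) ≤ K * ENNReal.ofReal r ^ (dim E - 1) := by
  set μ : Measure E := Measure.addHaar
  have hV : μ (ball 0 1) ≠ 0 := (measure_ball_pos μ _ one_pos).ne'
  have hVtop : μ (ball (0 : E) 1) ≠ ∞ := measure_ball_lt_top.ne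
  set C : ℝ≥0∞ := 4 ^ dim E * (10 ^ (dim E - 1) * (2 ^ dim E * μ (ball 0 1) * 2 ^ (dim E - 1)))
  have hC : C / μ (ball 0 1) ≠ ∞ := ENNReal.div_ne_top (by finiteness) hV
  refine ⟨(C / μ (ball 0 1)).toNNReal, fun z r hr => ?_⟩
  set A := closedBall z r ∩ sphere 0 1
  have hthick : cthickening r A ⊆ closedBall z (2 * r) := by
    rw [two_mul]
    exact (cthickening_subset_of_subset r inter_subset_left).trans_eq
      (cthickening_closedBall hr.le hr.le z)
  have hvitali := mul_hausdorffMeasure_le_measure_cthickening (s := (dim E : ℝ) - 1)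
    (ν := 4 ^ dim E • coneMeasure μ) hVtop
    (sub_nonneg.2 (Nat.one_le_cast.2 Module.finrank_pos)) two_pos hr (A := A)
    fun w hw t ht ht2 => by
      rw [rpow_natCast_sub_one _ Module.finrank_pos.ne', Measure.smul_apply, nsmul_eq_mul]
      exact_mod_cast mul_ofReal_pow_le_coneMeasure_closedBall μ
        (mem_sphere_zero_iff_norm.1 hw.2) ht ht2
  rw [rpow_natCast_sub_one _ Module.finrank_pos.ne', Measure.smul_apply, nsmul_eq_mul] at hvitali
  rw [ENNReal.coe_toNNReal hC, ← ENNReal.mul_div_right_comm, surfaceMeasure,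
    Measure.restrict_apply measurableSet_closedBall,
    ENNReal.le_div_iff_mul_le (.inl hV) (.inl hVtop), mul_comm]
  calc μ (ball 0 1) * μH[(dim E : ℝ) - 1] A
      ≤ 10 ^ (dim E - 1) * (4 ^ dim E * coneMeasure μ (cthickening r A)) := by
        exact_mod_cast hvitali
    _ ≤ 10 ^ (dim E - 1) * (4 ^ dim E *
          (2 ^ dim E * μ (ball 0 1) * ENNReal.ofReal (2 * r) ^ (dim E - 1))) := by
        gcongr
        exact (measure_mono hthick).trans (coneMeasure_closedBall_le μ z (by positivity))
    _ = C * ENNReal.ofReal r ^ (dim E - 1) := by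
        rw [ENNReal.ofReal_mul zero_le_two, ENNReal.ofReal_ofNat, mul_pow]
        ring

instance isFiniteMeasure_surfaceMeasure : IsFiniteMeasure (surfaceMeasure E) := by
  obtain ⟨K, hK⟩ := exists_surfaceMeasure_closedBall_le (E := E)
  have hmem : ∀ᵐ θ ∂(surfaceMeasure E), θ ∈ closedBall (0 : E) 1 := by
    filter_upwards [ae_norm_eq_one_surfaceMeasure E] with θ hθ
    exact mem_closedBall_zero_iff.2 hθ.le
  refine ⟨?_⟩
  rw [← measure_eq_measure_of_null_sdiff (subset_univ (closedBall (0 : E) 1))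
    (measure_mono_null (fun θ hθ => hθ.2) hmem)]
  exact (hK 0 1 one_pos).trans_lt (by finiteness)

lemma exists_le_surfaceMeasure_closedBall :
    ∃ k : ℝ≥0, k ≠ 0 ∧ ∀ z : E, ‖z‖ = 1 → ∀ r, 0 < r → r ≤ 1 →
      k * ENNReal.ofReal r ^ (dim E - 1) ≤ surfaceMeasure E (closedBall z r) := by
  set μ : Measure E := Measure.addHaar
  obtain ⟨K, hK, hle⟩ := exists_coneMeasure_le_smul_surfaceMeasure μ
  set C : ℝ≥0∞ := 4 ^ dim E * K
  have hC : C ≠ 0 := mul_ne_zero (by positivity) (ENNReal.coe_ne_zero.2 hK)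
  have hCtop : C ≠ ∞ := by finiteness
  have hk : μ (ball 0 1) / C ≠ ∞ := ENNReal.div_ne_top measure_ball_lt_top.ne hC
  refine ⟨(μ (ball 0 1) / C).toNNReal, ENNReal.toNNReal_ne_zero.2
    ⟨(ENNReal.div_pos (measure_ball_pos μ _ one_pos).ne' hCtop).ne', hk⟩, fun z hz r hr hr1 => ?_⟩
  rw [ENNReal.coe_toNNReal hk, ← ENNReal.mul_div_right_comm,
    ENNReal.div_le_iff_le_mul (.inl hC) (.inl hCtop), mul_comm _ C, mul_assoc]
  refine (mul_ofReal_pow_le_coneMeasure_closedBall μ hz hr (by linarith)).trans ?_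
  gcongr
  exact hle (closedBall z r)

end SurfaceMeasure

open NormedSpace (normalize norm_normalize norm_smul_normalize)

section RadialProjection

variable {E : Type*} [NormedAddCommGroup E] [NormedSpace ℝ E]

lemma dist_normalize_self {v : E} (hv : v ≠ 0) : dist (normalize v) v = |1 - ‖v‖| := by
  have hproj : normalize v - v = (1 - ‖v‖) • normalize v := by
    rw [sub_smul, one_smul, norm_smul_normalize]
  rw [dist_eq_norm, hproj, norm_smul, norm_normalize hv, mul_one, Real.norm_eq_abs]

@[fun_prop]
lemma measurable_normalize [MeasurableSpace E] [BorelSpace E] [SecondCountableTopology E] :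
    Measurable (normalize : E → E) :=
  measurable_norm.inv.smul measurable_id

lemma norm_mul_one_sub_add_dist_le {θ w : E} {ρ : ℝ} (hρ : ρ ∈ Ioo (0 : ℝ) 1) (hθ : ‖θ‖ = 1)
    (hw : 1 < ‖w‖) :
    ‖w‖ * (1 - ρ + dist θ (normalize w)) ≤ 18 * dist (ρ • θ) w := by
  obtain ⟨hρ0, hρ1⟩ := hρ
  have hw0 : w ≠ 0 := norm_pos_iff.1 (one_pos.trans hw)
  have hθρ : dist θ (ρ • θ) = 1 - ρ := by
    rw [dist_eq_norm, show θ - ρ • θ = (1 - ρ) • θ by module, norm_smul, hθ, mul_one,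
      Real.norm_of_nonneg (sub_nonneg.2 hρ1.le)]
  have hwproj : dist w (normalize w) = ‖w‖ - 1 := by
    rw [dist_comm, dist_normalize_self hw0, abs_sub_comm, abs_of_pos (sub_pos.2 hw)]
  have hgap : ‖w‖ - ρ ≤ dist (ρ • θ) w := by
    have := norm_sub_norm_le w (ρ • θ)
    rwa [norm_smul, hθ, mul_one, Real.norm_of_nonneg hρ0.le, ← dist_eq_norm, dist_comm] at this
  have hnear : dist θ (normalize w) ≤ 2 * dist (ρ • θ) w := by
    linarith [dist_triangle4 θ (ρ • θ) w (normalize w)]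
  have hdiam : dist θ (normalize w) ≤ 2 := by
    rw [dist_eq_norm]
    linarith [norm_sub_le θ (normalize w), norm_normalize hw0]
  rcases le_or_gt ‖w‖ 2 <;> nlinarith [dist_nonneg (x := θ) (y := normalize w)]

lemma ofReal_mul_inv_dist_pow_le {θ w : E} {ρ : ℝ} {n : ℕ} (hw : 1 < ‖w‖)
    (hρ : ρ ∈ Ioo (0 : ℝ) 1) (hθ : ‖θ‖ = 1) :
    ENNReal.ofReal (1 - ‖ρ • θ‖) * ENNReal.ofReal ((dist (ρ • θ) w ^ n)⁻¹) ≤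
      ENNReal.ofReal ((1 - ρ) * 18 ^ n * (‖w‖ ^ n)⁻¹) *
        ENNReal.ofReal ((1 - ρ + dist θ (normalize w)) ^ n)⁻¹ := by
  have hρ1 : 0 < 1 - ρ := sub_pos.2 hρ.2
  rw [norm_smul, hθ, mul_one, Real.norm_of_nonneg hρ.1.le, ← ENNReal.ofReal_mul hρ1.le,
    ← ENNReal.ofReal_mul (by positivity)]
  refine ENNReal.ofReal_le_ofReal ?_
  calc (1 - ρ) * (dist (ρ • θ) w ^ n)⁻¹
      ≤ (1 - ρ) * ((‖w‖ * (1 - ρ + dist θ (normalize w)) / 18) ^ n)⁻¹ := by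
        gcongr
        linarith [norm_mul_one_sub_add_dist_le hρ hθ hw]
    _ = _ := by
        rw [div_pow, mul_pow]
        field_simp

end RadialProjection

section DistPotential

variable {E : Type*} [NormedAddCommGroup E] [NormedSpace ℝ E] [MeasurableSpace E]

local notation "dim" => Module.finrank ℝ

/-- The potential of `m` with the kernel `dist x w ^ (-dim E)` that the Poisson and Martin
kernels of balls share. -/
noncomputable def distPotential (m : Measure E) (x : E) : ℝ≥0∞ :=
  ∫⁻ w, ENNReal.ofReal ((dist x w ^ dim E)⁻¹) ∂m

lemma distPotential_add (m m' : Measure E) (x : E) :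
    distPotential (m + m') x = distPotential m x + distPotential m' x :=
  lintegral_add_measure _ _ _

lemma distPotential_le_of_le_dist {m : Measure E} {x : E} {δ : ℝ} (hδ : 0 < δ)
    (hm : ∀ᵐ v ∂m, δ ≤ dist x v) :
    distPotential m x ≤ ENNReal.ofReal ((δ ^ dim E)⁻¹) * m univ := by
  rw [← lintegral_const]
  refine lintegral_mono_ae (hm.mono fun v hv => ?_)
  gcongr

lemma measurable_distPotential [BorelSpace E] [SecondCountableTopology E] (m : Measure E)
    [SFinite m] : Measurable (distPotential m) :=
  Measurable.lintegral_prod_right' (f := fun p : E × E =>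
    ENNReal.ofReal ((dist p.1 p.2 ^ dim E)⁻¹)) (by fun_prop)

end DistPotential

section AnnulusMeasure

/-- The density `(ρ - r)^(-a) (1 - ρ)^(a - 1)` on `(r, 1)`: the radial profile of the stable
Poisson kernel of the ball of radius `r`, against the boundary growth `(1 - ρ)^(a - 1)`. -/
noncomputable def betaWeight (a r ρ : ℝ) : ℝ :=
  (ρ - r) ^ (-a) * (1 - ρ) ^ (a - 1)

@[fun_prop]
lemma measurable_betaWeight (a r : ℝ) : Measurable (betaWeight a r) := by
  unfold betaWeight
  fun_prop

lemma betaWeight_nonneg {a r ρ : ℝ} (hr : r < ρ) (hρ : ρ < 1) : 0 ≤ betaWeight a r ρ :=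
  mul_nonneg (Real.rpow_nonneg (by linarith) _) (Real.rpow_nonneg (by linarith) _)

lemma betaWeight_add_mul {a r t : ℝ} (hr : r < 1) (ht : t ∈ Ioo (0 : ℝ) 1) :
    (1 - r) * betaWeight a r (r + (1 - r) * t) = t ^ (-a) * (1 - t) ^ (a - 1) := by
  have hr' : 0 < 1 - r := sub_pos.2 hr
  have hcancel : (1 - r) * ((1 - r) ^ (-a) * (1 - r) ^ (a - 1)) = 1 := by
    rw [← Real.rpow_add hr', show -a + (a - 1) = -1 by ring, Real.rpow_neg_one,
      mul_inv_cancel₀ hr'.ne']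
  rw [betaWeight, show r + (1 - r) * t - r = (1 - r) * t by ring,
    show 1 - (r + (1 - r) * t) = (1 - r) * (1 - t) by ring, Real.mul_rpow hr'.le ht.1.le,
    Real.mul_rpow hr'.le (sub_nonneg.2 ht.2.le)]
  linear_combination t ^ (-a) * (1 - t) ^ (a - 1) * hcancel

lemma lintegral_betaWeight {a r : ℝ} (ha : a ∈ Ioo (0 : ℝ) 1) (hr : r < 1) :
    ∫⁻ ρ in Ioo r 1, ENNReal.ofReal (betaWeight a r ρ) =
      ENNReal.ofReal (ProbabilityTheory.beta (1 - a) a) := by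
  have hr' : 0 < 1 - r := sub_pos.2 hr
  have hbeta : 0 < ProbabilityTheory.beta (1 - a) a :=
    ProbabilityTheory.beta_pos (sub_pos.2 ha.2) ha.1
  have himage : (fun t => r + (1 - r) * t) '' Ioo 0 1 = Ioo r 1 := by
    rw [← image_image (r + ·) ((1 - r) * ·), image_mul_left_Ioo hr', image_const_add_Ioo]
    simp
  have hderiv (t : ℝ) : HasDerivAt (fun t => r + (1 - r) * t) (1 - r) t := by
    simpa using ((hasDerivAt_id t).const_mul (1 - r)).const_add r
  have hinj : Function.Injective fun t => r + (1 - r) * t := fun s t hst =>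
    mul_left_cancel₀ hr'.ne' (add_left_cancel hst)
  calc ∫⁻ ρ in Ioo r 1, ENNReal.ofReal (betaWeight a r ρ)
      = ∫⁻ t in Ioo (0 : ℝ) 1, ENNReal.ofReal |1 - r| *
          ENNReal.ofReal (betaWeight a r (r + (1 - r) * t)) := by
        rw [← himage, lintegral_image_eq_lintegral_abs_deriv_mul measurableSet_Ioo
          (fun t _ => (hderiv t).hasDerivWithinAt) hinj.injOn]
    _ = ∫⁻ t in Ioo (0 : ℝ) 1, ENNReal.ofReal (ProbabilityTheory.beta (1 - a) a) *
          ENNReal.ofReal (1 / ProbabilityTheory.beta (1 - a) a * t ^ (1 - a - 1) *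
            (1 - t) ^ (a - 1)) := by
        refine setLIntegral_congr_fun measurableSet_Ioo fun t ht => ?_
        rw [abs_of_pos hr', ← ENNReal.ofReal_mul hr'.le, betaWeight_add_mul hr ht,
          ← ENNReal.ofReal_mul hbeta.le, show 1 - a - 1 = -a by ring]
        congr 1
        field_simp
    _ = _ := by
        rw [lintegral_const_mul _ (by fun_prop), ← ProbabilityTheory.lintegral_betaPDF,
          ProbabilityTheory.lintegral_betaPDF_eq_one (sub_pos.2 ha.2) ha.1, mul_one]

variable {E : Type*} [NormedAddCommGroup E]

/-- The part of the open unit ball outside the closed ball of radius `r`. -/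
def annulus (E : Type*) [NormedAddCommGroup E] (r : ℝ) : Set E :=
  {v | r < ‖v‖ ∧ ‖v‖ < 1}

variable [MeasurableSpace E]

/-- The measure `μ` on the annulus `r < ‖v‖ < 1`, weighted by `betaWeight a r`. -/
noncomputable def annulusMeasure (μ : Measure E) (a r : ℝ) : Measure E :=
  (μ.restrict (annulus E r)).withDensity fun v => ENNReal.ofReal (betaWeight a r ‖v‖)

variable [BorelSpace E]

lemma measurableSet_annulus (r : ℝ) : MeasurableSet (annulus E r) :=
  (measurableSet_lt measurable_const measurable_norm).inter
    (measurableSet_lt measurable_norm measurable_const)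

lemma lintegral_annulusMeasure (μ : Measure E) (a r : ℝ) {f : E → ℝ≥0∞} (hf : Measurable f) :
    ∫⁻ v, f v ∂(annulusMeasure μ a r) =
      ∫⁻ v in annulus E r, ENNReal.ofReal (betaWeight a r ‖v‖) * f v ∂μ := by
  rw [annulusMeasure, lintegral_withDensity_eq_lintegral_mul _ (by fun_prop) hf]
  rfl

lemma ae_mem_annulus (μ : Measure E) (a r : ℝ) :
    ∀ᵐ v ∂(annulusMeasure μ a r), v ∈ annulus E r :=
  (withDensity_absolutelyContinuous _ _).ae_le (ae_restrict_mem (measurableSet_annulus r))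

variable [NormedSpace ℝ E] (μ : Measure E)

lemma lintegral_indicator_annulus_smul (a r : ℝ) {f : E → ℝ≥0∞} (hf : Measurable f) {ρ : ℝ}
    (hρ : 0 < ρ) :
    ∫⁻ θ, (annulus E r).indicator (fun v => ENNReal.ofReal (betaWeight a r ‖v‖) * f v) (ρ • θ)
        ∂(coneMeasure μ) =
      (Ioo r 1).indicator (fun ρ =>
        ENNReal.ofReal (betaWeight a r ρ) * ∫⁻ θ, f (ρ • θ) ∂(coneMeasure μ)) ρ := by
  have hslice : ∀ᵐ θ ∂(coneMeasure μ),
      (annulus E r).indicator (fun v => ENNReal.ofReal (betaWeight a r ‖v‖) * f v) (ρ • θ) =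
        (Ioo r 1).indicator (fun ρ => ENNReal.ofReal (betaWeight a r ρ) * f (ρ • θ)) ρ := by
    filter_upwards [ae_norm_eq_one_coneMeasure μ] with θ hθ
    have hnorm : ‖ρ • θ‖ = ρ := by rw [norm_smul, hθ, mul_one, Real.norm_of_nonneg hρ.le]
    simp only [indicator_apply, annulus, mem_ofPred_eq, mem_Ioo, hnorm]
  rw [lintegral_congr_ae hslice]
  by_cases hmem : ρ ∈ Ioo r 1
  · simp only [indicator_of_mem hmem]
    exact lintegral_const_mul _ (hf.comp (measurable_const_smul ρ))
  · simp only [indicator_of_notMem hmem, lintegral_zero]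

local notation "dim" => Module.finrank ℝ

variable [FiniteDimensional ℝ E] [μ.IsAddHaarMeasure]

instance sFinite_annulusMeasure (a r : ℝ) : SFinite (annulusMeasure μ a r) := by
  unfold annulusMeasure
  infer_instance

lemma lintegral_annulusMeasure_distPotential (a r : ℝ) (m : Measure E) [SFinite m] :
    ∫⁻ v, ENNReal.ofReal (1 - ‖v‖) * distPotential m v ∂(annulusMeasure μ a r) =
      ∫⁻ w, ∫⁻ v, ENNReal.ofReal (1 - ‖v‖) * ENNReal.ofReal ((dist v w ^ dim E)⁻¹)
        ∂(annulusMeasure μ a r) ∂m := by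
  rw [lintegral_lintegral_swap (Measurable.aemeasurable (by unfold Function.uncurry; fun_prop))]
  refine lintegral_congr fun v => ?_
  rw [distPotential, lintegral_const_mul _ (by fun_prop)]

variable [Nontrivial E]

lemma lintegral_annulusMeasure_le {a r : ℝ} (ha : a ∈ Ioo (0 : ℝ) 1) (hr : r < 1)
    {f : E → ℝ≥0∞} (hf : Measurable f) {A : ℝ≥0∞}
    (hA : ∀ ρ ∈ Ioo (0 : ℝ) 1, ∫⁻ θ, f (ρ • θ) ∂(coneMeasure μ) ≤ A) :
    ∫⁻ v, f v ∂(annulusMeasure μ a r) ≤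
      ENNReal.ofReal (ProbabilityTheory.beta (1 - a) a) * A := by
  have hslice (ρ : ℝ) (hρ : 0 < ρ) : ENNReal.ofReal (ρ ^ (dim E - 1)) *
      (Ioo r 1).indicator (fun ρ =>
        ENNReal.ofReal (betaWeight a r ρ) * ∫⁻ θ, f (ρ • θ) ∂(coneMeasure μ)) ρ ≤
      (Ioo r 1).indicator (fun ρ => ENNReal.ofReal (betaWeight a r ρ) * A) ρ := by
    by_cases hmem : ρ ∈ Ioo r 1
    · rw [indicator_of_mem hmem, indicator_of_mem hmem]
      refine mul_le_of_le_one_of_le ?_ (mul_le_mul_right (hA ρ ⟨hρ, hmem.2⟩) _)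
      exact ENNReal.ofReal_le_one.2 (pow_le_one₀ hρ.le hmem.2.le)
    · rw [indicator_of_notMem hmem, mul_zero]
      exact zero_le
  calc ∫⁻ v, f v ∂(annulusMeasure μ a r)
      = ∫⁻ ρ in Ioi (0 : ℝ), ENNReal.ofReal (ρ ^ (dim E - 1)) *
          (Ioo r 1).indicator (fun ρ =>
            ENNReal.ofReal (betaWeight a r ρ) * ∫⁻ θ, f (ρ • θ) ∂(coneMeasure μ)) ρ := by
        rw [lintegral_annulusMeasure μ a r hf, ← lintegral_indicator (measurableSet_annulus r),
          lintegral_eq_lintegral_coneMeasure μ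
            (Measurable.indicator (by fun_prop) (measurableSet_annulus r))]
        exact setLIntegral_congr_fun measurableSet_Ioi fun ρ hρ => by
          simp only [lintegral_indicator_annulus_smul μ a r hf hρ]
    _ ≤ ∫⁻ ρ in Ioi (0 : ℝ),
          (Ioo r 1).indicator (fun ρ => ENNReal.ofReal (betaWeight a r ρ) * A) ρ :=
        setLIntegral_mono' measurableSet_Ioi hslice
    _ ≤ ∫⁻ ρ, (Ioo r 1).indicator (fun ρ => ENNReal.ofReal (betaWeight a r ρ) * A) ρ :=
        setLIntegral_le_lintegral _ _
    _ = _ := by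
        rw [lintegral_indicator measurableSet_Ioo, lintegral_mul_const _ (by fun_prop),
          lintegral_betaWeight ha hr]

lemma annulusMeasure_univ_le {a r : ℝ} (ha : a ∈ Ioo (0 : ℝ) 1) (hr : r < 1) :
    annulusMeasure μ a r univ ≤
      ENNReal.ofReal (ProbabilityTheory.beta (1 - a) a) * coneMeasure μ univ := by
  rw [← lintegral_one]
  exact lintegral_annulusMeasure_le μ ha hr measurable_const fun ρ _ => by
    rw [lintegral_one]

lemma lintegral_coneMeasure_inv_dist_pow_le {w : E} (hw : 1 < ‖w‖) {ρ : ℝ}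
    (hρ : ρ ∈ Ioo (0 : ℝ) 1) :
    ∫⁻ θ, ENNReal.ofReal (1 - ‖ρ • θ‖) * ENNReal.ofReal ((dist (ρ • θ) w ^ dim E)⁻¹)
        ∂(coneMeasure μ) ≤
      72 ^ dim E * μ (ball 0 1) * ENNReal.ofReal ((‖w‖ ^ dim E)⁻¹) := by
  have hρ1 : 0 < 1 - ρ := sub_pos.2 hρ.2
  calc _ ≤ ∫⁻ θ, ENNReal.ofReal ((1 - ρ) * 18 ^ dim E * (‖w‖ ^ dim E)⁻¹) *
          ENNReal.ofReal ((1 - ρ + dist θ (normalize w)) ^ dim E)⁻¹ ∂(coneMeasure μ) :=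
        lintegral_mono_ae <| (ae_norm_eq_one_coneMeasure μ).mono fun θ hθ =>
          ofReal_mul_inv_dist_pow_le hw hρ hθ
    _ ≤ ENNReal.ofReal ((1 - ρ) * 18 ^ dim E * (‖w‖ ^ dim E)⁻¹) *
          (2 ^ dim E * μ (ball 0 1) * ENNReal.ofReal (2 ^ dim E / (1 - ρ))) := by
        rw [lintegral_const_mul _ (by fun_prop)]
        gcongr
        exact lintegral_inv_add_dist_pow_le Module.finrank_pos.ne'
          (fun r hr => coneMeasure_closedBall_le μ _ hr.le) hρ1
    _ = 2 ^ dim E * μ (ball 0 1) * ENNReal.ofReal ((1 - ρ) * 18 ^ dim E * (‖w‖ ^ dim E)⁻¹ *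
          (2 ^ dim E / (1 - ρ))) := by
        rw [ENNReal.ofReal_mul (p := (1 - ρ) * 18 ^ dim E * (‖w‖ ^ dim E)⁻¹) (by positivity)]
        ring
    _ = 2 ^ dim E * μ (ball 0 1) * (36 ^ dim E * ENNReal.ofReal ((‖w‖ ^ dim E)⁻¹)) := by
        have h36 : (36 : ℝ≥0∞) ^ dim E = ENNReal.ofReal (36 ^ dim E) := by
          rw [ENNReal.ofReal_pow (by norm_num), ENNReal.ofReal_ofNat]
        rw [h36, ← ENNReal.ofReal_mul (by positivity), show (36 : ℝ) = 18 * 2 by norm_num, mul_pow]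
        congr 2
        field_simp
    _ = _ := by
        rw [show (72 : ℝ≥0∞) = 2 * 36 by norm_num, mul_pow]
        ring

lemma tendsto_lintegral_annulusMeasure_inv_dist_pow_zero {a : ℝ} (ha : a ∈ Ioo (0 : ℝ) 1) {w : E}
    (hw : 1 < ‖w‖) :
    Tendsto (fun r => ∫⁻ v, ENNReal.ofReal (1 - ‖v‖) * ENNReal.ofReal ((dist v w ^ dim E)⁻¹)
      ∂(annulusMeasure μ a r)) (𝓝[<] 1) (𝓝 0) := by
  set C := ENNReal.ofReal (((‖w‖ - 1) ^ dim E)⁻¹) *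
    (ENNReal.ofReal (ProbabilityTheory.beta (1 - a) a) * coneMeasure μ univ)
  have hC : C ≠ ∞ := by finiteness
  have hbound : ∀ r < 1, ∫⁻ v, ENNReal.ofReal (1 - ‖v‖) *
      ENNReal.ofReal ((dist v w ^ dim E)⁻¹) ∂(annulusMeasure μ a r) ≤
        ENNReal.ofReal (1 - r) * C := by
    intro r hr
    calc _ ≤ ∫⁻ _, ENNReal.ofReal (1 - r) * ENNReal.ofReal (((‖w‖ - 1) ^ dim E)⁻¹)
          ∂(annulusMeasure μ a r) := by
          refine lintegral_mono_ae ((ae_mem_annulus μ a r).mono fun v hv => ?_)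
          have hgap : ‖w‖ - 1 ≤ dist v w := by
            rw [dist_comm, dist_eq_norm]
            linarith [norm_sub_norm_le w v, hv.2]
          gcongr
          exact hv.1.le
      _ = ENNReal.ofReal (1 - r) * (ENNReal.ofReal (((‖w‖ - 1) ^ dim E)⁻¹) *
            annulusMeasure μ a r univ) := by rw [lintegral_const, mul_assoc]
      _ ≤ _ := by
          exact mul_le_mul_right (mul_le_mul_right (annulusMeasure_univ_le μ ha hr) _) _
  have hlim : Tendsto (fun r : ℝ => ENNReal.ofReal (1 - r) * C) (𝓝[<] 1) (𝓝 0) := by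
    have hcont : Tendsto (fun r : ℝ => ENNReal.ofReal (1 - r) * C) (𝓝 1)
        (𝓝 (ENNReal.ofReal (1 - 1) * C)) :=
      ENNReal.Tendsto.mul_const
        ((ENNReal.continuous_ofReal.comp (by fun_prop)).tendsto 1) (Or.inr hC)
    simpa using hcont.mono_left nhdsWithin_le_nhds
  exact tendsto_of_tendsto_of_tendsto_of_le_of_le' tendsto_const_nhds hlim
    (Eventually.of_forall fun _ => zero_le) (eventually_mem_nhdsWithin.mono hbound)

lemma tendsto_lintegral_annulusMeasure_distPotential_zero {a : ℝ} (ha : a ∈ Ioo (0 : ℝ) 1)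
    (m : Measure E) [SFinite m] (hm : ∀ᵐ w ∂m, 1 < ‖w‖) (hm0 : distPotential m 0 ≠ ∞) :
    Tendsto (fun r => ∫⁻ v, ENNReal.ofReal (1 - ‖v‖) * distPotential m v
      ∂(annulusMeasure μ a r)) (𝓝[<] 1) (𝓝 0) := by
  set B := ENNReal.ofReal (ProbabilityTheory.beta (1 - a) a) * (72 ^ dim E * μ (ball 0 1))
  have hB : B ≠ ∞ := by finiteness
  simp_rw [lintegral_annulusMeasure_distPotential]
  rw [← lintegral_zero (μ := m)]
  refine tendsto_lintegral_filter_of_dominated_convergence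
    (fun w => B * ENNReal.ofReal ((‖w‖ ^ dim E)⁻¹)) (Eventually.of_forall fun r => ?_)
    (eventually_mem_nhdsWithin.mono fun r hr => hm.mono fun w hw => ?_) ?_
    (hm.mono fun w hw => tendsto_lintegral_annulusMeasure_inv_dist_pow_zero μ ha hw)
  · exact Measurable.lintegral_prod_left' (f := fun p : E × E =>
      ENNReal.ofReal (1 - ‖p.1‖) * ENNReal.ofReal ((dist p.1 p.2 ^ dim E)⁻¹)) (by fun_prop)
  · rw [mul_assoc]
    exact lintegral_annulusMeasure_le μ ha hr (by fun_prop) fun ρ hρ =>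
      lintegral_coneMeasure_inv_dist_pow_le μ hw hρ
  · rw [lintegral_const_mul _ (by fun_prop)]
    simp only [distPotential, dist_zero_left] at hm0
    finiteness

lemma annulusMeasure_map_normalize_le {a r : ℝ} (ha : a ∈ Ioo (0 : ℝ) 1) (hr : r < 1) :
    (annulusMeasure μ a r).map NormedSpace.normalize ≤
      ENNReal.ofReal (ProbabilityTheory.beta (1 - a) a) • coneMeasure μ := by
  refine Measure.le_iff.2 fun s hs => ?_
  rw [Measure.map_apply measurable_normalize hs,
    ← lintegral_indicator_one (measurable_normalize hs), Measure.smul_apply, smul_eq_mul]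
  refine lintegral_annulusMeasure_le μ ha hr
    (measurable_one.indicator (measurable_normalize hs)) fun ρ hρ => ?_
  rw [← lintegral_indicator_one hs]
  refine lintegral_mono_ae ?_
  filter_upwards [ae_norm_eq_one_coneMeasure μ] with θ hθ
  have hproj : NormedSpace.normalize (ρ • θ) = θ := by
    rw [NormedSpace.normalize_smul_of_pos hρ.1, NormedSpace.normalize_eq_self_of_norm_eq_one hθ]
  exact (congrArg (s.indicator 1) hproj).le

end AnnulusMeasure

section WeakLimit

variable {X : Type*} [MeasurableSpace X] {τ : Measure X} [IsFiniteMeasure τ]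

lemma rnDeriv_le_of_le_smul {m : Measure X} {K : ℝ≥0} (hm : m ≤ K • τ) :
    m.rnDeriv τ ≤ᵐ[τ] fun _ => (K : ℝ≥0∞) := by
  refine ae_le_of_forall_setLIntegral_le_of_sigmaFinite (Measure.measurable_rnDeriv _ _)
    fun s _ _ => ?_
  calc ∫⁻ x in s, m.rnDeriv τ x ∂τ ≤ m s := Measure.setLIntegral_rnDeriv_le s
    _ ≤ ∫⁻ _ in s, (K : ℝ≥0∞) ∂τ := by
        rw [setLIntegral_const]
        exact hm s

lemma exists_memLp_two_norm_le_integral_eq {m : Measure X} {K : ℝ≥0} (hm : m ≤ K • τ) :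
    ∃ D : Lp ℝ 2 τ, ‖D‖ ≤ τ.real univ ^ (2 : ℝ≥0∞).toReal⁻¹ * K ∧
      ∀ f : Lp ℝ 2 τ, inner ℝ D f = ∫ x, f x ∂m := by
  have hac : m ≪ τ :=
    (Measure.absolutelyContinuous_of_le hm).trans Measure.smul_absolutelyContinuous
  have : IsFiniteMeasure m := isFiniteMeasure_of_le _ hm
  have hbound : ∀ᵐ x ∂τ, ‖(m.rnDeriv τ x).toReal‖ ≤ K := by
    filter_upwards [rnDeriv_le_of_le_smul hm] with x hx
    rw [Real.norm_of_nonneg ENNReal.toReal_nonneg]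
    exact ENNReal.toReal_le_of_le_ofReal K.2 (by simpa using hx)
  have hD : MemLp (fun x => (m.rnDeriv τ x).toReal) 2 τ :=
    MemLp.of_bound (Measure.measurable_rnDeriv _ _).ennreal_toReal.aestronglyMeasurable K hbound
  refine ⟨hD.toLp _, Lp.norm_le_of_ae_bound K.2 ?_, fun f => ?_⟩
  · filter_upwards [hD.coeFn_toLp, hbound] with x hx hle
    rwa [hx]
  · rw [← integral_rnDeriv_smul hac, L2.inner_def]
    refine integral_congr_ae ?_
    filter_upwards [hD.coeFn_toLp] with x hx
    rw [hx, RCLike.inner_apply, conj_trivial, smul_eq_mul, mul_comm]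

lemma exists_tendsto_inner_of_norm_le {H ι : Type*} [NormedAddCommGroup H] [InnerProductSpace ℝ H]
    [CompleteSpace H] (F : Ultrafilter ι) {D : ι → H} {R : ℝ} (hD : ∀ i, ‖D i‖ ≤ R) :
    ∃ ψ : H, ∀ f, Tendsto (fun i => inner ℝ (D i) f) F (𝓝 (inner ℝ ψ f)) := by
  let Λ : ι → WeakDual ℝ H := fun i => StrongDual.toWeakDual (InnerProductSpace.toDual ℝ H (D i))
  have hΛ (i : ι) : Λ i ∈ WeakDual.toStrongDual ⁻¹' closedBall (0 : StrongDual ℝ H) R := by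
    rw [mem_preimage, mem_closedBall_zero_iff]
    exact ((InnerProductSpace.toDual ℝ H).norm_map (D i)).trans_le (hD i)
  obtain ⟨ℓ, -, hℓ : Tendsto Λ F (𝓝 ℓ)⟩ :=
    (WeakDual.isCompact_closedBall (0 : StrongDual ℝ H) R).ultrafilter_le_nhds (F.map Λ)
      (le_principal_iff.2 (Ultrafilter.mem_map.2 (univ_mem' hΛ)))
  refine ⟨(InnerProductSpace.toDual ℝ H).symm (WeakDual.toStrongDual ℓ), fun f => ?_⟩
  rw [InnerProductSpace.toDual_symm_apply]
  exact ((WeakDual.eval_continuous f).tendsto ℓ).comp hℓ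

lemma exists_memLp_two_tendsto_integral_of_le_smul {ι : Type*} (F : Ultrafilter ι)
    {m : ι → Measure X} {K : ℝ≥0} (hm : ∀ i, m i ≤ K • τ) :
    ∃ ψ : Lp ℝ 2 τ, ∀ f : X → ℝ, MemLp f 2 τ →
      Tendsto (fun i => ∫ x, f x ∂(m i)) F (𝓝 (∫ x, f x * ψ x ∂τ)) := by
  choose D hD hD_integral using fun i => exists_memLp_two_norm_le_integral_eq (hm i)
  obtain ⟨ψ, hψ⟩ := exists_tendsto_inner_of_norm_le F hD
  refine ⟨ψ, fun f hf => ?_⟩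
  have hlim : inner ℝ ψ (hf.toLp f) = ∫ x, f x * ψ x ∂τ := by
    rw [L2.inner_def]
    refine integral_congr_ae ?_
    filter_upwards [hf.coeFn_toLp] with x hx
    rw [hx, RCLike.inner_apply, conj_trivial]
  have hterm (i : ι) : inner ℝ (D i) (hf.toLp f) = ∫ x, f x ∂(m i) := by
    rw [hD_integral]
    exact integral_congr_ae (((Measure.absolutelyContinuous_of_le (hm i)).trans
      Measure.smul_absolutelyContinuous).ae_le hf.coeFn_toLp)
  rw [← hlim]
  exact (hψ (hf.toLp f)).congr hterm

lemma exists_nonneg_tendsto_integral_of_le_smul {ι : Type*} (F : Ultrafilter ι)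
    {m : ι → Measure X} {K : ℝ≥0} (hm : ∀ i, m i ≤ K • τ) :
    ∃ φ : X → ℝ, Measurable φ ∧ (∀ x, 0 ≤ φ x) ∧ Integrable φ τ ∧
      ∀ f : X → ℝ, MemLp f 2 τ →
        Tendsto (fun i => ∫ x, f x ∂(m i)) F (𝓝 (∫ x, f x * φ x ∂τ)) := by
  obtain ⟨ψ, hψ⟩ := exists_memLp_two_tendsto_integral_of_le_smul F hm
  have hψ_int : Integrable ψ τ := (Lp.memLp ψ).integrable one_le_two
  have hψ_nonneg : 0 ≤ᵐ[τ] ψ := by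
    refine ae_nonneg_of_forall_setIntegral_nonneg hψ_int fun s hs _ => ?_
    have hlim := hψ (s.indicator 1) ((memLp_const (1 : ℝ)).indicator hs)
    simp_rw [← indicator_mul_left, Pi.one_apply, one_mul] at hlim
    rw [integral_indicator hs] at hlim
    exact ge_of_tendsto hlim <| Eventually.of_forall fun i =>
      integral_nonneg <| indicator_nonneg fun _ _ => zero_le_one
  have hφ : (fun x => max (ψ x) 0) =ᵐ[τ] ψ := hψ_nonneg.mono fun x hx => max_eq_left hx
  refine ⟨fun x => max (ψ x) 0, (Lp.stronglyMeasurable ψ).measurable.max measurable_const,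
    fun x => le_max_right _ _, hψ_int.congr hφ.symm, fun f hf => ?_⟩
  rw [integral_congr_ae (hφ.mono fun x hx => congrArg (f x * ·) hx)]
  exact hψ f hf

end WeakLimit

section PoissonKernel

variable {n : ℕ} {α r : ℝ}

local notation "𝔼" => EuclideanSpace ℝ (Fin n)

/-- The normalizing constant of `stablePoissonKernel n α`. -/
noncomputable def poissonConst (n : ℕ) (α : ℝ) : ℝ :=
  Real.Gamma (n / 2) * Real.pi ^ (-(n : ℝ) / 2 - 1) * Real.sin (Real.pi * α / 2)

lemma poissonConst_pos [NeZero n] (hα : α ∈ Ioo (0 : ℝ) 2) : 0 < poissonConst n α := by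
  obtain ⟨hα0, hα2⟩ := hα
  have hpi := Real.pi_pos
  have hn : (0 : ℝ) < n := Nat.cast_pos.2 (NeZero.pos n)
  have hsin : 0 < Real.sin (Real.pi * α / 2) :=
    Real.sin_pos_of_pos_of_lt_pi (by positivity) (by nlinarith)
  unfold poissonConst
  positivity

/-- The part of `stablePoissonKernel n α 0 r x v` that depends on `r` and `v` only. -/
noncomputable def sweepWeight (α r : ℝ) (v : 𝔼) : ℝ :=
  poissonConst n α * (‖v‖ ^ 2 - r ^ 2) ^ (-(α / 2))

@[fun_prop]
lemma measurable_sweepWeight (α r : ℝ) : Measurable (sweepWeight (n := n) α r) := by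
  unfold sweepWeight
  fun_prop

lemma sweepWeight_nonneg [NeZero n] (hα : α ∈ Ioo (0 : ℝ) 2) (hr : 0 ≤ r) {v : 𝔼}
    (hv : r < ‖v‖) : 0 ≤ sweepWeight α r v :=
  mul_nonneg (poissonConst_pos hα).le (Real.rpow_nonneg (by nlinarith) _)

lemma stablePoissonKernel_zero_eq {x v : 𝔼} (hx : ‖x‖ < r) (hv : r < ‖v‖) :
    stablePoissonKernel n α 0 r x v = (r ^ 2 - ‖x‖ ^ 2) ^ (α / 2) *
      (sweepWeight α r v * (dist x v ^ Module.finrank ℝ 𝔼)⁻¹) := by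
  have hx' : 0 ≤ r ^ 2 - ‖x‖ ^ 2 := by nlinarith [norm_nonneg x]
  have hv' : 0 ≤ ‖v‖ ^ 2 - r ^ 2 := by nlinarith [norm_nonneg x]
  rw [stablePoissonKernel, sweepWeight, poissonConst, dist_zero_right, dist_zero_right,
    Real.div_rpow hx' hv', Real.rpow_neg dist_nonneg, Real.rpow_natCast, Real.rpow_neg hv',
    finrank_euclideanSpace_fin]
  ring

lemma stablePoissonKernel_zero_nonneg [NeZero n] (hα : α ∈ Ioo (0 : ℝ) 2) {x v : 𝔼}
    (hx : ‖x‖ < r) (hv : r < ‖v‖) : 0 ≤ stablePoissonKernel n α 0 r x v := by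
  have hr : 0 ≤ r := (norm_nonneg x).trans hx.le
  have hfactor : 0 ≤ (r ^ 2 - ‖x‖ ^ 2) ^ (α / 2) :=
    Real.rpow_nonneg (by nlinarith [norm_nonneg x]) _
  have hweight := sweepWeight_nonneg hα hr hv
  rw [stablePoissonKernel_zero_eq hx hv]
  positivity

lemma measurable_stablePoissonKernel (α r : ℝ) :
    Measurable fun p : 𝔼 × 𝔼 => stablePoissonKernel n α 0 r p.1 p.2 := by
  unfold stablePoissonKernel
  fun_prop

end PoissonKernel

section Sweep

/-- The complement of the closed ball of radius `r` centred at the origin. -/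
def exterior (E : Type*) [NormedAddCommGroup E] (r : ℝ) : Set E :=
  {v | r < ‖v‖}

lemma measurableSet_exterior {E : Type*} [NormedAddCommGroup E] [MeasurableSpace E] [BorelSpace E]
    (r : ℝ) : MeasurableSet (exterior E r) :=
  measurableSet_lt measurable_const measurable_norm

lemma exterior_ae_eq_annulus_union {E : Type*} [NormedAddCommGroup E] [NormedSpace ℝ E]
    [FiniteDimensional ℝ E] [Nontrivial E] [MeasurableSpace E] [BorelSpace E]
    (μ : Measure E) [μ.IsAddHaarMeasure] {r : ℝ} (hr : r < 1) :
    exterior E r =ᵐ[μ] (annulus E r ∪ exterior E 1 : Set E) := by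
  filter_upwards [measure_eq_zero_iff_ae_notMem.1 (Measure.addHaar_sphere μ (0 : E) 1)] with v hv
  rw [mem_sphere_zero_iff_norm] at hv
  refine propext ⟨fun h => ?_, ?_⟩
  · exact (lt_or_gt_of_ne hv).imp (fun hlt => ⟨h, hlt⟩) id
  · rintro (h | h)
    exacts [h.1, hr.trans h]

variable {n : ℕ} {α r : ℝ}

local notation "𝔼" => EuclideanSpace ℝ (Fin n)

/-- The measure `f(v) dv` on `s`, weighted so that the balayage of `f 𝟙_s` into the ball of
radius `r` is `(r² - ‖x‖²)^(α/2)` times the `distPotential` of this measure at `x`. -/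
noncomputable def sweepMeasure (α r : ℝ) (s : Set 𝔼) (f : 𝔼 → ℝ) : Measure 𝔼 :=
  (volume.restrict s).withDensity fun v => ENNReal.ofReal (sweepWeight α r v * f v)

instance sFinite_sweepMeasure (s : Set 𝔼) (f : 𝔼 → ℝ) : SFinite (sweepMeasure α r s f) := by
  unfold sweepMeasure
  infer_instance

lemma lintegral_sweepMeasure (α r : ℝ) (s : Set 𝔼) {f : 𝔼 → ℝ} (hf : Measurable f)
    {g : 𝔼 → ℝ≥0∞} (hg : Measurable g) :
    ∫⁻ v, g v ∂(sweepMeasure α r s f) =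
      ∫⁻ v in s, ENNReal.ofReal (sweepWeight α r v * f v) * g v := by
  rw [sweepMeasure, lintegral_withDensity_eq_lintegral_mul _ (by fun_prop) hg]
  rfl

lemma ae_mem_sweepMeasure (α r : ℝ) {s : Set 𝔼} (hs : MeasurableSet s) (f : 𝔼 → ℝ) :
    ∀ᵐ v ∂(sweepMeasure α r s f), v ∈ s :=
  (withDensity_absolutelyContinuous _ _).ae_le (ae_restrict_mem hs)

lemma sweepMeasure_exterior [NeZero n] (f : 𝔼 → ℝ) (hr : r < 1) :
    sweepMeasure α r (exterior 𝔼 r) f =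
      sweepMeasure α r (annulus 𝔼 r) f + sweepMeasure α r (exterior 𝔼 1) f := by
  have hdisj : Disjoint (annulus 𝔼 r) (exterior 𝔼 1) :=
    Set.disjoint_left.2 fun v hv hv' => lt_asymm hv.2 hv'
  simp only [sweepMeasure]
  rw [Measure.restrict_congr_set (exterior_ae_eq_annulus_union volume hr),
    Measure.restrict_union hdisj (measurableSet_exterior 1), withDensity_add_measure]

lemma sweepMeasure_add [NeZero n] (hα : α ∈ Ioo (0 : ℝ) 2) (hr : 0 ≤ r) {s : Set 𝔼}
    (hs : MeasurableSet s) (hsr : s ⊆ exterior 𝔼 r) {f g : 𝔼 → ℝ} (hf : Measurable f)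
    (hf0 : ∀ v ∈ s, 0 ≤ f v) (hg0 : ∀ v ∈ s, 0 ≤ g v) :
    sweepMeasure α r s (fun v => f v + g v) = sweepMeasure α r s f + sweepMeasure α r s g := by
  simp only [sweepMeasure]
  rw [← withDensity_add_left (by fun_prop)]
  refine withDensity_congr_ae ((ae_restrict_mem hs).mono fun v hv => ?_)
  have hweight := sweepWeight_nonneg hα hr (hsr hv)
  simp only [Pi.add_apply]
  rw [mul_add, ENNReal.ofReal_add (mul_nonneg hweight (hf0 v hv))
    (mul_nonneg hweight (hg0 v hv))]

lemma lintegral_stablePoissonKernel_mul {f : 𝔼 → ℝ} (hf : Measurable f) {x : 𝔼} (hx : ‖x‖ < r) :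
    ∫⁻ v in exterior 𝔼 r, ENNReal.ofReal (stablePoissonKernel n α 0 r x v * f v) =
      ENNReal.ofReal ((r ^ 2 - ‖x‖ ^ 2) ^ (α / 2)) *
        distPotential (sweepMeasure α r (exterior 𝔼 r) f) x := by
  rw [distPotential, lintegral_sweepMeasure α r _ hf (by fun_prop),
    ← lintegral_const_mul _ (by fun_prop)]
  refine setLIntegral_congr_fun (measurableSet_exterior r) fun v hv => ?_
  have hfactor : 0 ≤ (r ^ 2 - ‖x‖ ^ 2) ^ (α / 2) :=
    Real.rpow_nonneg (by nlinarith [norm_nonneg x]) _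
  rw [stablePoissonKernel_zero_eq hx hv, ← ENNReal.ofReal_mul' (by positivity),
    ← ENNReal.ofReal_mul hfactor]
  congr 1
  ring

lemma ofReal_eq_mul_distPotential_of_isAlphaHarmonic [NeZero n] (hα : α ∈ Ioo (0 : ℝ) 2)
    {u : 𝔼 → ℝ} (hu : IsAlphaHarmonic n α (ball 0 1) u) (hr : r < 1) {x : 𝔼} (hx : ‖x‖ < r) :
    ENNReal.ofReal (u x) = ENNReal.ofReal ((r ^ 2 - ‖x‖ ^ 2) ^ (α / 2)) *
      distPotential (sweepMeasure α r (exterior 𝔼 r) u) x := by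
  obtain ⟨hmeas, hnonneg, -, hmean⟩ := hu
  obtain ⟨hint, hmean⟩ := hmean 0 r ((norm_nonneg x).trans_lt hx) (closedBall_subset_ball hr) x
    (mem_ball_zero_iff.2 hx)
  simp only [dist_zero_right] at hint hmean
  rw [← lintegral_stablePoissonKernel_mul hmeas hx, ← hmean]
  refine ofReal_integral_eq_lintegral_ofReal hint ?_
  filter_upwards [ae_restrict_mem (measurableSet_exterior r)] with v hv
  exact mul_nonneg (stablePoissonKernel_zero_nonneg hα hx hv) (hnonneg v)

lemma tendsto_ofReal_sq_sub_rpow (hα : 0 ≤ α) (x : 𝔼) :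
    Tendsto (fun r : ℝ => ENNReal.ofReal ((r ^ 2 - ‖x‖ ^ 2) ^ (α / 2))) (𝓝[<] 1)
      (𝓝 (ENNReal.ofReal ((1 ^ 2 - ‖x‖ ^ 2) ^ (α / 2)))) := by
  have hcont : Continuous fun r : ℝ => (r ^ 2 - ‖x‖ ^ 2) ^ (α / 2) :=
    Continuous.rpow_const (by fun_prop) fun _ => Or.inr (by positivity)
  exact ENNReal.tendsto_ofReal ((hcont.tendsto 1).mono_left nhdsWithin_le_nhds)

lemma ofReal_sweepWeight_mul_le_sweepWeight_one [NeZero n] (hα : α ∈ Ioo (0 : ℝ) 2)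
    (hr : r ∈ Ico (0 : ℝ) 1) {v : 𝔼} (hv : 1 < ‖v‖) {t : ℝ} (ht : 0 ≤ t) :
    ENNReal.ofReal (sweepWeight α r v * t) ≤ ENNReal.ofReal (sweepWeight α 1 v * t) := by
  have hconst := (poissonConst_pos (n := n) hα).le
  refine ENNReal.ofReal_le_ofReal (mul_le_mul_of_nonneg_right
    (mul_le_mul_of_nonneg_left ?_ hconst) ht)
  exact Real.rpow_le_rpow_of_nonpos (by nlinarith) (by nlinarith [hr.1, hr.2])
    (by linarith [hα.1])

lemma tendsto_ofReal_sweepWeight_mul {v : 𝔼} (hv : 1 < ‖v‖) (t : ℝ) :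
    Tendsto (fun r => ENNReal.ofReal (sweepWeight α r v * t)) (𝓝[<] 1)
      (𝓝 (ENNReal.ofReal (sweepWeight α 1 v * t))) := by
  have hcont : ContinuousAt (fun r => sweepWeight α r v * t) 1 := by
    have hbase : ‖v‖ ^ 2 - 1 ^ 2 ≠ 0 := by nlinarith
    have hpow : ContinuousAt (fun r : ℝ => (‖v‖ ^ 2 - r ^ 2) ^ (-(α / 2))) 1 :=
      ContinuousAt.rpow_const (by fun_prop) (Or.inl hbase)
    exact (hpow.const_mul _).mul_const t
  exact ENNReal.tendsto_ofReal (hcont.tendsto.mono_left nhdsWithin_le_nhds)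

lemma tendsto_distPotential_sweepMeasure_exterior [NeZero n] (hα : α ∈ Ioo (0 : ℝ) 2)
    {u : 𝔼 → ℝ} (hu : Measurable u) (hu0 : ∀ v, 0 ≤ u v) (x : 𝔼) :
    Tendsto (fun r => distPotential (sweepMeasure α r (exterior 𝔼 1) u) x) (𝓝[<] 1)
      (𝓝 (distPotential (sweepMeasure α 1 (exterior 𝔼 1) u) x)) := by
  have hdensity (r : ℝ) : distPotential (sweepMeasure α r (exterior 𝔼 1) u) x =
      ∫⁻ v in exterior 𝔼 1, ENNReal.ofReal (sweepWeight α r v * u v) *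
        ENNReal.ofReal ((dist x v ^ Module.finrank ℝ 𝔼)⁻¹) :=
    lintegral_sweepMeasure α r _ hu (by fun_prop)
  simp only [hdensity]
  refine tendsto_of_le_liminf_of_limsup_le ?_ ?_
  · refine le_trans (lintegral_mono_ae ?_) (lintegral_liminf_le fun r => by fun_prop)
    filter_upwards [ae_restrict_mem (measurableSet_exterior 1)] with v hv
    exact (ENNReal.Tendsto.mul_const (tendsto_ofReal_sweepWeight_mul hv (u v))
      (Or.inr ENNReal.ofReal_ne_top)).liminf_eq.ge
  · refine limsup_le_of_le (h := ?_)
    filter_upwards [Ico_mem_nhdsLT zero_lt_one] with r hr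
    exact setLIntegral_mono' (measurableSet_exterior 1) fun v hv =>
      mul_le_mul_left (ofReal_sweepWeight_mul_le_sweepWeight_one hα hr hv (hu0 v)) _

end Sweep

section SingularPart

variable {n : ℕ} {α : ℝ} {u : EuclideanSpace ℝ (Fin n) → ℝ}

local notation "𝔼" => EuclideanSpace ℝ (Fin n)

/-- The Poisson integral over the exterior of the unit ball, as a Bochner integral: its value
is `0` where the integral diverges. -/
noncomputable def poissonIntegral (α : ℝ) (u : 𝔼 → ℝ) (x : 𝔼) : ℝ :=
  ∫ v in exterior 𝔼 1, stablePoissonKernel n α 0 1 x v * u v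

/-- What the Poisson integral of the exterior values misses: the part of `u` carried by the
unit sphere. -/
noncomputable def singularPart (α : ℝ) (u : 𝔼 → ℝ) (x : 𝔼) : ℝ :=
  u x - poissonIntegral α u x

@[fun_prop]
lemma measurable_poissonIntegral (hu : Measurable u) : Measurable (poissonIntegral α u) :=
  (StronglyMeasurable.integral_prod_right' (f := fun p : 𝔼 × 𝔼 =>
    stablePoissonKernel n α 0 1 p.1 p.2 * u p.2)
    ((measurable_stablePoissonKernel α 1).mul
      (hu.comp measurable_snd)).stronglyMeasurable).measurable

@[fun_prop]
lemma measurable_singularPart (hu : Measurable u) : Measurable (singularPart α u) :=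
  hu.sub (measurable_poissonIntegral hu)

variable [NeZero n]

lemma poissonIntegral_nonneg (hα : α ∈ Ioo (0 : ℝ) 2) (hu0 : ∀ v, 0 ≤ u v) {x : 𝔼}
    (hx : ‖x‖ < 1) : 0 ≤ poissonIntegral α u x :=
  setIntegral_nonneg (measurableSet_exterior 1) fun v hv =>
    mul_nonneg (stablePoissonKernel_zero_nonneg hα hx hv) (hu0 v)

lemma eventually_distPotential_annulus_add_exterior (hα : α ∈ Ioo (0 : ℝ) 2)
    (hu : IsAlphaHarmonic n α (ball 0 1) u) {x : 𝔼} (hx : ‖x‖ < 1) :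
    ∀ᶠ r : ℝ in 𝓝[<] 1, ENNReal.ofReal ((r ^ 2 - ‖x‖ ^ 2) ^ (α / 2)) *
        distPotential (sweepMeasure α r (annulus 𝔼 r) u) x +
      ENNReal.ofReal ((r ^ 2 - ‖x‖ ^ 2) ^ (α / 2)) *
        distPotential (sweepMeasure α r (exterior 𝔼 1) u) x = ENNReal.ofReal (u x) := by
  filter_upwards [Ioo_mem_nhdsLT hx] with r hr
  rw [ofReal_eq_mul_distPotential_of_isAlphaHarmonic hα hu hr.2 hr.1,
    sweepMeasure_exterior u hr.2, distPotential_add, mul_add]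

lemma tendsto_mul_distPotential_exterior (hα : α ∈ Ioo (0 : ℝ) 2) (hu : Measurable u)
    (hu0 : ∀ v, 0 ≤ u v) {x : 𝔼} (hx : ‖x‖ < 1) :
    Tendsto (fun r : ℝ => ENNReal.ofReal ((r ^ 2 - ‖x‖ ^ 2) ^ (α / 2)) *
        distPotential (sweepMeasure α r (exterior 𝔼 1) u) x) (𝓝[<] 1)
      (𝓝 (ENNReal.ofReal ((1 ^ 2 - ‖x‖ ^ 2) ^ (α / 2)) *
        distPotential (sweepMeasure α 1 (exterior 𝔼 1) u) x)) := by
  have hfactor : ENNReal.ofReal ((1 ^ 2 - ‖x‖ ^ 2) ^ (α / 2)) ≠ 0 :=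
    ENNReal.ofReal_ne_zero_iff.2 (Real.rpow_pos_of_pos (by nlinarith [norm_nonneg x]) _)
  exact ENNReal.Tendsto.mul (tendsto_ofReal_sq_sub_rpow hα.1.le x) (Or.inl hfactor)
    (tendsto_distPotential_sweepMeasure_exterior hα hu hu0 x) (Or.inr ENNReal.ofReal_ne_top)

lemma distPotential_exterior_ne_top (hα : α ∈ Ioo (0 : ℝ) 2)
    (hu : IsAlphaHarmonic n α (ball 0 1) u) {x : 𝔼} (hx : ‖x‖ < 1) :
    distPotential (sweepMeasure α 1 (exterior 𝔼 1) u) x ≠ ∞ := by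
  have hfactor : ENNReal.ofReal ((1 ^ 2 - ‖x‖ ^ 2) ^ (α / 2)) ≠ 0 :=
    ENNReal.ofReal_ne_zero_iff.2 (Real.rpow_pos_of_pos (by nlinarith [norm_nonneg x]) _)
  have hle : ENNReal.ofReal ((1 ^ 2 - ‖x‖ ^ 2) ^ (α / 2)) *
      distPotential (sweepMeasure α 1 (exterior 𝔼 1) u) x ≤ ENNReal.ofReal (u x) :=
    le_of_tendsto (tendsto_mul_distPotential_exterior hα hu.1 hu.2.1 hx) <|
      (eventually_distPotential_annulus_add_exterior hα hu hx).mono fun r hr =>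
        le_add_self.trans hr.le
  intro htop
  rw [htop, ENNReal.mul_top hfactor] at hle
  exact ENNReal.ofReal_ne_top (top_le_iff.1 hle)

lemma ofReal_poissonIntegral (hα : α ∈ Ioo (0 : ℝ) 2) (hu : IsAlphaHarmonic n α (ball 0 1) u)
    {x : 𝔼} (hx : ‖x‖ < 1) :
    ENNReal.ofReal (poissonIntegral α u x) = ENNReal.ofReal ((1 ^ 2 - ‖x‖ ^ 2) ^ (α / 2)) *
      distPotential (sweepMeasure α 1 (exterior 𝔼 1) u) x := by
  have hfin := distPotential_exterior_ne_top hα hu hx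
  have hmeas : Measurable fun v => stablePoissonKernel n α 0 1 x v * u v :=
    ((measurable_stablePoissonKernel α 1).comp measurable_prodMk_left).mul hu.1
  rw [poissonIntegral, integral_eq_lintegral_of_nonneg_ae _ hmeas.aestronglyMeasurable,
    lintegral_stablePoissonKernel_mul hu.1 hx, ENNReal.ofReal_toReal (by finiteness)]
  filter_upwards [ae_restrict_mem (measurableSet_exterior 1)] with v hv
  exact mul_nonneg (stablePoissonKernel_zero_nonneg hα hx hv) (hu.2.1 v)

lemma tendsto_mul_distPotential_annulus (hα : α ∈ Ioo (0 : ℝ) 2)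
    (hu : IsAlphaHarmonic n α (ball 0 1) u) {x : 𝔼} (hx : ‖x‖ < 1) :
    Tendsto (fun r : ℝ => ENNReal.ofReal ((r ^ 2 - ‖x‖ ^ 2) ^ (α / 2)) *
        distPotential (sweepMeasure α r (annulus 𝔼 r) u) x) (𝓝[<] 1)
      (𝓝 (ENNReal.ofReal (singularPart α u x))) := by
  have hlim := tendsto_mul_distPotential_exterior hα hu.1 hu.2.1 hx
  rw [← ofReal_poissonIntegral hα hu hx] at hlim
  rw [singularPart, ENNReal.ofReal_sub _ (poissonIntegral_nonneg hα hu.2.1 hx)]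
  refine (ENNReal.Tendsto.sub tendsto_const_nhds hlim (Or.inl ENNReal.ofReal_ne_top)).congr' ?_
  filter_upwards [eventually_distPotential_annulus_add_exterior hα hu hx] with r hr
  rw [← hr]
  exact ENNReal.add_sub_cancel_right
    (ne_top_of_le_ne_top ENNReal.ofReal_ne_top (le_add_self.trans hr.le))

lemma ofReal_sweepWeight_mul_le (hα : α ∈ Ioo (0 : ℝ) 2) {r : ℝ} (hr : 1 / 2 ≤ r) {v : 𝔼}
    (hv : v ∈ annulus 𝔼 r) {s t : ℝ} (ht0 : 0 ≤ t) (ht : t ≤ (1 - ‖v‖) ^ (α / 2 - 1) * s) :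
    ENNReal.ofReal (sweepWeight α r v * t) ≤ ENNReal.ofReal (poissonConst n α) *
      (ENNReal.ofReal (betaWeight (α / 2) r ‖v‖) * ENNReal.ofReal s) := by
  obtain ⟨hrv, hv1⟩ := hv
  have hconst := (poissonConst_pos (n := n) hα).le
  have hweight : (‖v‖ ^ 2 - r ^ 2) ^ (-(α / 2)) ≤ (‖v‖ - r) ^ (-(α / 2)) :=
    Real.rpow_le_rpow_of_nonpos (by linarith) (by nlinarith) (by linarith [hα.1])
  rw [← ENNReal.ofReal_mul (betaWeight_nonneg hrv hv1), ← ENNReal.ofReal_mul hconst]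
  refine ENNReal.ofReal_le_ofReal ?_
  calc sweepWeight α r v * t
      ≤ poissonConst n α * (‖v‖ - r) ^ (-(α / 2)) * ((1 - ‖v‖) ^ (α / 2 - 1) * s) := by
        unfold sweepWeight
        gcongr
    _ = _ := by
        rw [betaWeight]
        ring

lemma lintegral_sweepMeasure_annulus_le (hα : α ∈ Ioo (0 : ℝ) 2) {r : ℝ} (hr : 1 / 2 ≤ r)
    {f g : 𝔼 → ℝ} (hf : Measurable f) (hf0 : ∀ v ∈ annulus 𝔼 r, 0 ≤ f v) (hg : Measurable g)
    (hfg : ∀ v ∈ annulus 𝔼 r, f v ≤ (1 - ‖v‖) ^ (α / 2 - 1) * g v) {h : 𝔼 → ℝ≥0∞}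
    (hh : Measurable h) :
    ∫⁻ v, h v ∂(sweepMeasure α r (annulus 𝔼 r) f) ≤ ENNReal.ofReal (poissonConst n α) *
      ∫⁻ v, ENNReal.ofReal (g v) * h v ∂(annulusMeasure volume (α / 2) r) := by
  rw [lintegral_sweepMeasure α r _ hf hh, lintegral_annulusMeasure volume _ _ (by fun_prop),
    ← lintegral_const_mul _ (by fun_prop)]
  refine setLIntegral_mono' (measurableSet_annulus r) fun v hv => ?_
  rw [← mul_assoc, ← mul_assoc]
  refine (mul_le_mul_left (ofReal_sweepWeight_mul_le hα hr hv (hf0 v hv) (hfg v hv)) _).trans ?_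
  rw [← mul_assoc]

lemma one_sub_sq_rpow_le {a t : ℝ} (ha : 0 ≤ a) (ht : t ∈ Ico (0 : ℝ) 1) :
    (1 ^ 2 - t ^ 2) ^ a ≤ (1 - t) ^ (a - 1) * (2 ^ a * (1 - t)) := by
  have ht' : 0 < 1 - t := sub_pos.2 ht.2
  calc (1 ^ 2 - t ^ 2) ^ a ≤ (2 * (1 - t)) ^ a :=
        Real.rpow_le_rpow (by nlinarith [ht.1]) (by nlinarith [ht.1]) ha
    _ = _ := by
        rw [Real.mul_rpow zero_le_two ht'.le, mul_left_comm, ← Real.rpow_add_one ht'.ne',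
          sub_add_cancel]

lemma poissonIntegral_eq_mul_toReal_distPotential (hα : α ∈ Ioo (0 : ℝ) 2)
    (hu : IsAlphaHarmonic n α (ball 0 1) u) {x : 𝔼} (hx : ‖x‖ < 1) :
    poissonIntegral α u x = (1 ^ 2 - ‖x‖ ^ 2) ^ (α / 2) *
      (distPotential (sweepMeasure α 1 (exterior 𝔼 1) u) x).toReal := by
  have hfactor : 0 ≤ (1 ^ 2 - ‖x‖ ^ 2) ^ (α / 2) :=
    Real.rpow_nonneg (by nlinarith [norm_nonneg x]) _
  rw [← ENNReal.toReal_ofReal (poissonIntegral_nonneg hα hu.2.1 hx),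
    ofReal_poissonIntegral hα hu hx, ENNReal.toReal_mul, ENNReal.toReal_ofReal hfactor]

lemma poissonIntegral_le (hα : α ∈ Ioo (0 : ℝ) 2) (hu : IsAlphaHarmonic n α (ball 0 1) u) {x : 𝔼}
    (hx : ‖x‖ < 1) :
    poissonIntegral α u x ≤ (1 - ‖x‖) ^ (α / 2 - 1) * (2 ^ (α / 2) * (1 - ‖x‖) *
      (distPotential (sweepMeasure α 1 (exterior 𝔼 1) u) x).toReal) := by
  rw [poissonIntegral_eq_mul_toReal_distPotential hα hu hx, ← mul_assoc]
  gcongr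
  exact one_sub_sq_rpow_le (by linarith [hα.1]) ⟨norm_nonneg x, hx⟩

lemma sweepMeasure_annulus_poissonIntegral_univ_le (hα : α ∈ Ioo (0 : ℝ) 2)
    (hu : IsAlphaHarmonic n α (ball 0 1) u) {r : ℝ} (hr : 1 / 2 ≤ r) :
    sweepMeasure α r (annulus 𝔼 r) (poissonIntegral α u) univ ≤
      ENNReal.ofReal (poissonConst n α) * (ENNReal.ofReal (2 ^ (α / 2)) *
        ∫⁻ v, ENNReal.ofReal (1 - ‖v‖) *
          distPotential (sweepMeasure α 1 (exterior 𝔼 1) u) v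
            ∂(annulusMeasure volume (α / 2) r)) := by
  have hpot := measurable_distPotential (sweepMeasure α 1 (exterior 𝔼 1) u)
  rw [← lintegral_one]
  refine (lintegral_sweepMeasure_annulus_le hα hr (measurable_poissonIntegral hu.1)
    (fun v hv => poissonIntegral_nonneg hα hu.2.1 hv.2)
    (by fun_prop) (fun v hv => poissonIntegral_le hα hu hv.2) measurable_const).trans_eq ?_
  rw [← lintegral_const_mul (ENNReal.ofReal (2 ^ (α / 2))) (by fun_prop)]
  congr 1
  refine lintegral_congr_ae ?_
  filter_upwards [ae_mem_annulus volume (α / 2) r] with v hv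
  have hv1 : 0 ≤ 1 - ‖v‖ := sub_nonneg.2 hv.2.le
  rw [mul_one, ENNReal.ofReal_mul (by positivity), ENNReal.ofReal_mul (by positivity),
    ENNReal.ofReal_toReal (distPotential_exterior_ne_top hα hu hv.2), mul_assoc]

lemma tendsto_sweepMeasure_annulus_poissonIntegral_univ_zero (hα : α ∈ Ioo (0 : ℝ) 2)
    (hu : IsAlphaHarmonic n α (ball 0 1) u) :
    Tendsto (fun r => sweepMeasure α r (annulus 𝔼 r) (poissonIntegral α u) univ) (𝓝[<] 1)
      (𝓝 0) := by
  have hvanish := tendsto_lintegral_annulusMeasure_distPotential_zero volume (a := α / 2)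
    ⟨by linarith [hα.1], by linarith [hα.2]⟩ (sweepMeasure α 1 (exterior 𝔼 1) u)
    (ae_mem_sweepMeasure α 1 (measurableSet_exterior 1) u)
    (distPotential_exterior_ne_top hα hu (by simp))
  have hbound := ENNReal.Tendsto.const_mul (a := ENNReal.ofReal (poissonConst n α))
    (ENNReal.Tendsto.const_mul (a := ENNReal.ofReal (2 ^ (α / 2))) hvanish
      (Or.inr ENNReal.ofReal_ne_top)) (Or.inr ENNReal.ofReal_ne_top)
  rw [mul_zero, mul_zero] at hbound
  refine tendsto_of_tendsto_of_tendsto_of_le_of_le' tendsto_const_nhds hbound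
    (Eventually.of_forall fun _ => zero_le) ?_
  filter_upwards [Ioo_mem_nhdsLT (by norm_num : (1 / 2 : ℝ) < 1)] with r hr
  exact sweepMeasure_annulus_poissonIntegral_univ_le hα hu hr.1.le

lemma tendsto_distPotential_annulus_poissonIntegral_zero (hα : α ∈ Ioo (0 : ℝ) 2)
    (hu : IsAlphaHarmonic n α (ball 0 1) u) {x : 𝔼} (hx : ‖x‖ < 1) :
    Tendsto (fun r => distPotential (sweepMeasure α r (annulus 𝔼 r) (poissonIntegral α u)) x)
      (𝓝[<] 1) (𝓝 0) := by
  have hδ : 0 < (1 - ‖x‖) / 2 := by linarith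
  have hbound := ENNReal.Tendsto.const_mul
    (a := ENNReal.ofReal ((((1 - ‖x‖) / 2) ^ Module.finrank ℝ 𝔼)⁻¹))
    (tendsto_sweepMeasure_annulus_poissonIntegral_univ_zero hα hu)
    (Or.inr ENNReal.ofReal_ne_top)
  rw [mul_zero] at hbound
  refine tendsto_of_tendsto_of_tendsto_of_le_of_le' tendsto_const_nhds hbound
    (Eventually.of_forall fun _ => zero_le) ?_
  filter_upwards [Ioo_mem_nhdsLT (by linarith : (1 + ‖x‖) / 2 < 1)] with r hr
  refine distPotential_le_of_le_dist hδ ?_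
  filter_upwards [ae_mem_sweepMeasure α r (measurableSet_annulus r) _] with v hv
  rw [dist_comm, dist_eq_norm]
  linarith [norm_sub_norm_le v x, hr.1, hv.1]

lemma tendsto_mul_distPotential_annulus_singularPart (hα : α ∈ Ioo (0 : ℝ) 2)
    (hu : IsAlphaHarmonic n α (ball 0 1) u)
    (hsing : ∀ x ∈ ball (0 : 𝔼) 1, 0 ≤ singularPart α u x) {x : 𝔼} (hx : ‖x‖ < 1) :
    Tendsto (fun r : ℝ => ENNReal.ofReal ((r ^ 2 - ‖x‖ ^ 2) ^ (α / 2)) *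
        distPotential (sweepMeasure α r (annulus 𝔼 r) (singularPart α u)) x) (𝓝[<] 1)
      (𝓝 (ENNReal.ofReal (singularPart α u x))) := by
  have hpoisson := ENNReal.Tendsto.mul (tendsto_ofReal_sq_sub_rpow hα.1.le x)
    (Or.inr ENNReal.zero_ne_top) (tendsto_distPotential_annulus_poissonIntegral_zero hα hu hx)
    (Or.inr ENNReal.ofReal_ne_top)
  rw [mul_zero] at hpoisson
  have hdiff := ENNReal.Tendsto.sub (tendsto_mul_distPotential_annulus hα hu hx) hpoisson
    (Or.inl ENNReal.ofReal_ne_top)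
  rw [tsub_zero] at hdiff
  refine hdiff.congr' ?_
  filter_upwards [hpoisson.eventually (gt_mem_nhds ENNReal.zero_lt_top),
    Ico_mem_nhdsLT zero_lt_one] with r hfin hr
  have hsplit : sweepMeasure α r (annulus 𝔼 r) u =
      sweepMeasure α r (annulus 𝔼 r) (singularPart α u) +
        sweepMeasure α r (annulus 𝔼 r) (poissonIntegral α u) := by
    rw [← sweepMeasure_add hα hr.1 (measurableSet_annulus r) (fun v hv => hv.1)
      (measurable_singularPart hu.1) (fun v hv => hsing v (mem_ball_zero_iff.2 hv.2))
      fun v hv => poissonIntegral_nonneg hα hu.2.1 hv.2]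
    simp only [singularPart, sub_add_cancel]
  rw [hsplit, distPotential_add, mul_add]
  exact ENNReal.add_sub_cancel_right hfin.ne

end SingularPart

section RadialProjectionOfMeasures

variable {E : Type*} [NormedAddCommGroup E] {r : ℝ} {x v : E}

lemma sub_norm_le_dist {w : E} {a : ℝ} (hw : a ≤ ‖w‖) : a - ‖x‖ ≤ dist x w := by
  rw [dist_comm, dist_eq_norm]
  linarith [norm_sub_norm_le w x]

variable [NormedSpace ℝ E]

local notation "dim" => Module.finrank ℝ

lemma dist_normalize_le_one_sub (hr : 0 ≤ r) (hv : v ∈ annulus E r) :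
    dist (NormedSpace.normalize v) v ≤ 1 - r := by
  rw [dist_normalize_self (norm_pos_iff.1 (hr.trans_lt hv.1)), abs_of_pos (sub_pos.2 hv.2)]
  linarith [hv.1]

lemma le_div_mul_of_le_add {a b s t : ℝ} (hs : 0 < s) (hst : s ≤ t) (ha : s ≤ a)
    (hb : b ≤ a + (t - s)) : b ≤ t / s * a := by
  rw [div_mul_eq_mul_div, le_div_iff₀ hs]
  nlinarith

lemma dist_le_div_mul_dist_normalize (hx : ‖x‖ < r) (hv : v ∈ annulus E r) :
    dist x v ≤ (1 - ‖x‖) / (r - ‖x‖) * dist x (NormedSpace.normalize v) := by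
  have hr : 0 ≤ r := (norm_nonneg x).trans hx.le
  have hproj := dist_normalize_le_one_sub hr hv
  have hgap : r - ‖x‖ ≤ dist x (NormedSpace.normalize v) := sub_norm_le_dist <| by
    rw [norm_normalize (norm_pos_iff.1 (hr.trans_lt hv.1))]
    linarith [hv.1, hv.2]
  exact le_div_mul_of_le_add (sub_pos.2 hx) (by linarith [hv.1, hv.2]) hgap
    (by linarith [dist_triangle x (NormedSpace.normalize v) v])

lemma dist_normalize_le_div_mul_dist (hx : ‖x‖ < r) (hv : v ∈ annulus E r) :
    dist x (NormedSpace.normalize v) ≤ (1 - ‖x‖) / (r - ‖x‖) * dist x v := by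
  have hproj := dist_normalize_le_one_sub ((norm_nonneg x).trans hx.le) hv
  exact le_div_mul_of_le_add (sub_pos.2 hx) (by linarith [hv.1, hv.2])
    (sub_norm_le_dist hv.1.le)
    (by linarith [dist_triangle_right x (NormedSpace.normalize v) v])

lemma ofReal_inv_pow_le_mul {a b t : ℝ} (ha : 0 < a) (hb : 0 < b) (hab : a ≤ t * b) (k : ℕ) :
    ENNReal.ofReal ((b ^ k)⁻¹) ≤ ENNReal.ofReal (t ^ k) * ENNReal.ofReal ((a ^ k)⁻¹) := by
  have ht : 0 < t := pos_of_mul_pos_left (ha.trans_le hab) hb.le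
  rw [← ENNReal.ofReal_mul (by positivity)]
  refine ENNReal.ofReal_le_ofReal ?_
  rw [← div_eq_mul_inv, le_div_iff₀ (by positivity), inv_mul_le_iff₀ (by positivity), ← mul_pow,
    mul_comm b]
  gcongr

variable [MeasurableSpace E] [BorelSpace E] [SecondCountableTopology E] {κ : Measure E}

lemma distPotential_map_normalize_le (hx : ‖x‖ < r) (hκ : ∀ᵐ v ∂κ, v ∈ annulus E r) :
    distPotential (κ.map NormedSpace.normalize) x ≤
      ENNReal.ofReal (((1 - ‖x‖) / (r - ‖x‖)) ^ dim E) * distPotential κ x := by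
  rw [distPotential, distPotential, lintegral_map (by fun_prop) measurable_normalize,
    ← lintegral_const_mul _ (by fun_prop)]
  refine lintegral_mono_ae (hκ.mono fun v hv => ?_)
  have hgap : 0 < dist x v := (sub_pos.2 hx).trans_le (sub_norm_le_dist hv.1.le)
  have hle := dist_le_div_mul_dist_normalize hx hv
  have hfactor : 0 < (1 - ‖x‖) / (r - ‖x‖) :=
    div_pos (by linarith [hv.1, hv.2]) (sub_pos.2 hx)
  exact ofReal_inv_pow_le_mul hgap (pos_of_mul_pos_right (hgap.trans_le hle) hfactor.le) hle _

lemma distPotential_le_mul_distPotential_map_normalize (hx : ‖x‖ < r)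
    (hκ : ∀ᵐ v ∂κ, v ∈ annulus E r) :
    distPotential κ x ≤ ENNReal.ofReal (((1 - ‖x‖) / (r - ‖x‖)) ^ dim E) *
      distPotential (κ.map NormedSpace.normalize) x := by
  rw [distPotential, distPotential, lintegral_map (by fun_prop) measurable_normalize,
    ← lintegral_const_mul _ (by fun_prop)]
  refine lintegral_mono_ae (hκ.mono fun v hv => ?_)
  have hv0 : v ≠ 0 := norm_pos_iff.1 ((norm_nonneg x).trans_lt (hx.trans hv.1))
  have hgap : 0 < dist x (NormedSpace.normalize v) :=
    (by linarith [hv.1, hv.2] : 0 < 1 - ‖x‖).trans_le (sub_norm_le_dist (norm_normalize hv0).ge)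
  have hgap' : 0 < dist x v := (sub_pos.2 hx).trans_le (sub_norm_le_dist hv.1.le)
  exact ofReal_inv_pow_le_mul hgap hgap' (dist_normalize_le_div_mul_dist hx hv) _

lemma tendsto_mul_distPotential_map_normalize {κ : ℝ → Measure E}
    (hκ : ∀ r, ∀ᵐ v ∂(κ r), v ∈ annulus E r) (hx : ‖x‖ < 1) {a : ℝ → ℝ≥0∞} {L : ℝ≥0∞}
    (hlim : Tendsto (fun r => a r * distPotential (κ r) x) (𝓝[<] 1) (𝓝 L)) :
    Tendsto (fun r => a r * distPotential ((κ r).map NormedSpace.normalize) x) (𝓝[<] 1)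
      (𝓝 L) := by
  have hratio : Tendsto (fun r => ENNReal.ofReal (((1 - ‖x‖) / (r - ‖x‖)) ^ dim E)) (𝓝[<] 1)
      (𝓝 1) := by
    have hsub : Tendsto (fun r : ℝ => r - ‖x‖) (𝓝[<] 1) (𝓝 (1 - ‖x‖)) :=
      ((continuous_id.sub continuous_const).tendsto 1).mono_left nhdsWithin_le_nhds
    have := ENNReal.tendsto_ofReal
      (((tendsto_const_nhds (x := 1 - ‖x‖)).div hsub (sub_pos.2 hx).ne').pow (dim E))
    rwa [div_self (sub_pos.2 hx).ne', one_pow, ENNReal.ofReal_one] at this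
  have hupper := ENNReal.Tendsto.mul hratio (Or.inl one_ne_zero) hlim (Or.inr ENNReal.one_ne_top)
  have hlower := ENNReal.Tendsto.div hlim (Or.inr one_ne_zero) hratio (Or.inl ENNReal.one_ne_top)
  rw [one_mul] at hupper
  rw [div_one] at hlower
  refine tendsto_of_tendsto_of_tendsto_of_le_of_le' hlower hupper ?_ ?_ <;>
    filter_upwards [Ioo_mem_nhdsLT hx] with r hr
  · refine ENNReal.div_le_of_le_mul' ?_
    rw [mul_left_comm]
    exact mul_le_mul_right (distPotential_le_mul_distPotential_map_normalize hr.1 (hκ r)) _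
  · rw [mul_left_comm]
    exact mul_le_mul_right (distPotential_map_normalize_le hr.1 (hκ r)) _

lemma integral_inv_dist_pow (κ : Measure E) (x : E) :
    ∫ w, (dist x w ^ dim E)⁻¹ ∂κ = (distPotential κ x).toReal :=
  integral_eq_lintegral_of_nonneg_ae (Eventually.of_forall fun w => by positivity)
    (by fun_prop)

end RadialProjectionOfMeasures

section KernelOnSphere

variable {E : Type*} [NormedAddCommGroup E] {x : E}

lemma norm_inv_dist_pow_le (hx : ‖x‖ < 1) {w : E} (hw : 1 ≤ ‖w‖) (k : ℕ) :
    ‖(dist x w ^ k)⁻¹‖ ≤ ((1 - ‖x‖) ^ k)⁻¹ := by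
  have : 0 < 1 - ‖x‖ := sub_pos.2 hx
  rw [Real.norm_of_nonneg (by positivity)]
  gcongr
  exact sub_norm_le_dist hw

local notation "dim" => Module.finrank ℝ

lemma memLp_inv_dist_pow [NormedSpace ℝ E] [FiniteDimensional ℝ E] [Nontrivial E]
    [MeasurableSpace E] [BorelSpace E] (hx : ‖x‖ < 1) (p : ℝ≥0∞) :
    MemLp (fun w => (dist x w ^ dim E)⁻¹) p (surfaceMeasure E) := by
  refine MemLp.of_bound (by fun_prop) (((1 - ‖x‖) ^ dim E)⁻¹) ?_
  filter_upwards [ae_norm_eq_one_surfaceMeasure E] with w hw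
  exact norm_inv_dist_pow_le hx hw.ge _

end KernelOnSphere

section Representation

variable {n : ℕ} {α : ℝ} {u : EuclideanSpace ℝ (Fin n) → ℝ}

local notation "𝔼" => EuclideanSpace ℝ (Fin n)

lemma martinKernel_eq_mul_inv_dist_pow (α : ℝ) (x w : 𝔼) :
    martinKernel n α x w =
      (1 ^ 2 - ‖x‖ ^ 2) ^ (α / 2) * (dist x w ^ Module.finrank ℝ 𝔼)⁻¹ := by
  rw [martinKernel, Real.rpow_neg dist_nonneg, Real.rpow_natCast, finrank_euclideanSpace_fin,
    one_pow]

variable [NeZero n]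

lemma sweepMeasure_annulus_le_smul_annulusMeasure (hα : α ∈ Ioo (0 : ℝ) 2) {r c : ℝ}
    (hr : 1 / 2 ≤ r) {f : 𝔼 → ℝ} (hf : Measurable f) (hf0 : ∀ v ∈ annulus 𝔼 r, 0 ≤ f v)
    (hfc : ∀ v ∈ annulus 𝔼 r, f v ≤ c * (1 - ‖v‖) ^ (α / 2 - 1)) :
    sweepMeasure α r (annulus 𝔼 r) f ≤
      (ENNReal.ofReal (poissonConst n α) * ENNReal.ofReal c) •
        annulusMeasure volume (α / 2) r := by
  refine Measure.le_iff.2 fun s hs => ?_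
  have hle := lintegral_sweepMeasure_annulus_le hα hr hf hf0 (measurable_const (a := c))
    (fun v hv => (hfc v hv).trans_eq (mul_comm _ _)) (measurable_one.indicator hs)
  rwa [lintegral_const_mul _ (measurable_one.indicator hs), lintegral_indicator_one hs,
    lintegral_indicator_one hs, ← mul_assoc] at hle

lemma exists_sweepMeasure_map_normalize_le_smul_surfaceMeasure (hα : α ∈ Ioo (0 : ℝ) 2) {c : ℝ}
    {f : 𝔼 → ℝ} (hf : Measurable f) (hf0 : ∀ v ∈ ball (0 : 𝔼) 1, 0 ≤ f v)
    (hfc : ∀ v ∈ ball (0 : 𝔼) 1, f v ≤ c * (1 - ‖v‖) ^ (α / 2 - 1)) :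
    ∃ K : ℝ≥0, ∀ r ∈ Ico (1 / 2 : ℝ) 1,
      (sweepMeasure α r (annulus 𝔼 r) f).map NormedSpace.normalize ≤ K • surfaceMeasure 𝔼 := by
  obtain ⟨K, -, hK⟩ := exists_coneMeasure_le_smul_surfaceMeasure (volume : Measure 𝔼)
  set A : ℝ≥0∞ := ENNReal.ofReal (poissonConst n α) * ENNReal.ofReal c
  set b : ℝ≥0∞ := ENNReal.ofReal (ProbabilityTheory.beta (1 - α / 2) (α / 2))
  refine ⟨(A * (b * K)).toNNReal, fun r hr => ?_⟩
  have hsub {v : 𝔼} (hv : v ∈ annulus 𝔼 r) : v ∈ ball 0 1 := mem_ball_zero_iff.2 hv.2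
  calc (sweepMeasure α r (annulus 𝔼 r) f).map NormedSpace.normalize
      ≤ (A • annulusMeasure volume (α / 2) r).map NormedSpace.normalize :=
        Measure.map_mono (sweepMeasure_annulus_le_smul_annulusMeasure hα hr.1 hf
          (fun v hv => hf0 v (hsub hv)) fun v hv => hfc v (hsub hv)) measurable_normalize
    _ ≤ A • b • K • surfaceMeasure 𝔼 := by
        rw [Measure.map_smul]
        gcongr
        exact (annulusMeasure_map_normalize_le volume ⟨by linarith [hα.1], by linarith [hα.2]⟩
          hr.2).trans (by gcongr)
    _ = (A * (b * K)).toNNReal • surfaceMeasure 𝔼 := by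
        rw [← Measure.coe_nnreal_smul, ← Measure.coe_nnreal_smul,
          ENNReal.coe_toNNReal (by finiteness), mul_smul A, mul_smul b]

lemma tendsto_mul_integral_map_normalize_singularPart (hα : α ∈ Ioo (0 : ℝ) 2)
    (hu : IsAlphaHarmonic n α (ball 0 1) u)
    (hsing : ∀ x ∈ ball (0 : 𝔼) 1, 0 ≤ singularPart α u x) {x : 𝔼} (hx : ‖x‖ < 1) :
    Tendsto (fun r : ℝ => (r ^ 2 - ‖x‖ ^ 2) ^ (α / 2) *
        ∫ w, (dist x w ^ Module.finrank ℝ 𝔼)⁻¹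
          ∂((sweepMeasure α r (annulus 𝔼 r) (singularPart α u)).map NormedSpace.normalize))
      (𝓝[<] 1) (𝓝 (singularPart α u x)) := by
  have hlim := tendsto_mul_distPotential_map_normalize
    (fun r => ae_mem_sweepMeasure α r (measurableSet_annulus r) _) hx
    (tendsto_mul_distPotential_annulus_singularPart hα hu hsing hx)
  have hlim_real := (ENNReal.tendsto_toReal ENNReal.ofReal_ne_top).comp hlim
  rw [ENNReal.toReal_ofReal (hsing x (mem_ball_zero_iff.2 hx))] at hlim_real
  refine hlim_real.congr' ?_
  filter_upwards [Ioo_mem_nhdsLT hx] with r hr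
  rw [Function.comp_apply, ENNReal.toReal_mul, integral_inv_dist_pow, ENNReal.toReal_ofReal
    (Real.rpow_nonneg (by nlinarith [hr.1, norm_nonneg x]) _)]

lemma exists_singularPart_eq_integral_martinKernel (hα : α ∈ Ioo (0 : ℝ) 2)
    (hu : IsAlphaHarmonic n α (ball 0 1) u) {c : ℝ}
    (hsing : ∀ x ∈ ball (0 : 𝔼) 1, 0 ≤ singularPart α u x)
    (hle : ∀ x ∈ ball (0 : 𝔼) 1, singularPart α u x ≤ c * (1 - ‖x‖) ^ (α / 2 - 1)) :
    ∃ φ : 𝔼 → ℝ, Measurable φ ∧ (∀ w, 0 ≤ φ w) ∧ Integrable φ (surfaceMeasure 𝔼) ∧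
      ∀ x : 𝔼, ‖x‖ < 1 →
        singularPart α u x = ∫ w, martinKernel n α x w * φ w ∂(surfaceMeasure 𝔼) := by
  have : IsFiniteMeasure (surfaceMeasure 𝔼) := isFiniteMeasure_surfaceMeasure
  obtain ⟨K, hK⟩ := exists_sweepMeasure_map_normalize_le_smul_surfaceMeasure hα
    (measurable_singularPart hu.1) hsing hle
  obtain ⟨r, -, hr, hr_lim⟩ := exists_seq_strictMono_tendsto' (by norm_num : (1 / 2 : ℝ) < 1)
  obtain ⟨φ, hφ_meas, hφ_nonneg, hφ_int, hφ⟩ := exists_nonneg_tendsto_integral_of_le_smul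
    (hyperfilter ℕ) fun k => hK (r k) ⟨(hr k).1.le, (hr k).2⟩
  refine ⟨φ, hφ_meas, hφ_nonneg, hφ_int, fun x hx => ?_⟩
  have hr_left : Tendsto r (hyperfilter ℕ) (𝓝[<] 1) :=
    (tendsto_nhdsWithin_iff.2 ⟨hr_lim, Eventually.of_forall fun k => (hr k).2⟩).mono_left
      Nat.hyperfilter_le_atTop
  have hfactor : Tendsto (fun k => (r k ^ 2 - ‖x‖ ^ 2) ^ (α / 2)) (hyperfilter ℕ)
      (𝓝 ((1 ^ 2 - ‖x‖ ^ 2) ^ (α / 2))) :=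
    (((hr_lim.mono_left Nat.hyperfilter_le_atTop).pow 2).sub_const _).rpow_const
      (Or.inr (by linarith [hα.1]))
  simp_rw [martinKernel_eq_mul_inv_dist_pow, mul_assoc, integral_const_mul]
  exact tendsto_nhds_unique
    ((tendsto_mul_integral_map_normalize_singularPart hα hu hsing hx).comp hr_left)
    (hfactor.mul (hφ _ (memLp_inv_dist_pow hx 2)))

end Representation

section Fatou

variable {E : Type*} [NormedAddCommGroup E]

/-- The nontangential approach region of aperture `β` at the point `z` of the unit sphere. -/
def approachRegion (β : ℝ) (z : E) : Set E :=
  {x | ‖x‖ < 1 ∧ dist x z < β * (1 - ‖x‖)}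

lemma tendsto_one_sub_norm_approachRegion (β : ℝ) {z : E} (hz : ‖z‖ = 1) :
    Tendsto (fun x => 1 - ‖x‖) (𝓝[approachRegion β z] z) (𝓝[>] 0) := by
  refine tendsto_nhdsWithin_iff.2 ⟨?_, eventually_mem_nhdsWithin.mono fun x hx => sub_pos.2 hx.1⟩
  have hlim : Tendsto (fun x : E => 1 - ‖x‖) (𝓝 z) (𝓝 (1 - ‖z‖)) :=
    (continuous_const.sub continuous_norm).tendsto z
  rw [hz, sub_self] at hlim
  exact hlim.mono_left nhdsWithin_le_nhds

variable [NormedSpace ℝ E] [MeasurableSpace E] [BorelSpace E] {m : Measure E} {φ : E → ℝ} {x z : E}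

local notation "dim" => Module.finrank ℝ

lemma distPotential_le_of_mem_approachRegion [SecondCountableTopology E] {β : ℝ}
    (hx : x ∈ approachRegion β z) (hm : ∀ᵐ w ∂m, 1 ≤ ‖w‖) :
    distPotential m x ≤ ENNReal.ofReal ((2 + β) ^ dim E) *
      ∫⁻ w, ENNReal.ofReal ((1 - ‖x‖ + dist w z) ^ dim E)⁻¹ ∂m := by
  have hpos : 0 < 1 - ‖x‖ := sub_pos.2 hx.1
  rw [← lintegral_const_mul _ (by fun_prop)]
  refine lintegral_mono_ae (hm.mono fun w hw => ?_)
  have hgap : 1 - ‖x‖ ≤ dist x w := sub_norm_le_dist hw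
  have hβ : 0 < β := pos_of_mul_pos_left (dist_nonneg.trans_lt hx.2) hpos.le
  have htriangle : dist w z ≤ dist x w + β * (1 - ‖x‖) := by
    linarith [dist_triangle_left w z x, hx.2]
  exact ofReal_inv_pow_le_mul (by positivity) (hpos.trans_le hgap) (by nlinarith) _

lemma isLocallyFiniteMeasure_of_distPotential_zero_ne_top [SecondCountableTopology E]
    (hm : ∀ᵐ w ∂m, w ≠ 0) (hm0 : distPotential m 0 ≠ ∞) : IsLocallyFiniteMeasure m := by
  refine ⟨fun y => ⟨ball y 1, ball_mem_nhds y one_pos, ?_⟩⟩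
  set c : ℝ≥0∞ := ENNReal.ofReal (((‖y‖ + 1) ^ dim E)⁻¹)
  have hc : c ≠ 0 := ENNReal.ofReal_ne_zero_iff.2 (by positivity)
  calc m (ball y 1) ≤ m {w | c ≤ ENNReal.ofReal ((dist 0 w ^ dim E)⁻¹)} := by
        refine measure_mono_ae (hm.mono fun w hw hwy => ENNReal.ofReal_le_ofReal ?_)
        have hw0 : 0 < dist 0 w := dist_pos.2 hw.symm
        have hwy' : dist w y < 1 := hwy
        gcongr
        linarith [dist_triangle 0 y w, dist_zero_left y, dist_comm w y]
    _ ≤ distPotential m 0 / c :=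
        meas_ge_le_lintegral_div (Measurable.aemeasurable (by fun_prop)) hc ENNReal.ofReal_ne_top
    _ < ∞ := ENNReal.div_lt_top hm0 hc

lemma mutuallySingular_surfaceMeasure (hm : ∀ᵐ w ∂m, ‖w‖ ≠ 1) : m ⟂ₘ surfaceMeasure E := by
  refine ⟨sphere 0 1, isClosed_sphere.measurableSet, ?_, ?_⟩
  · rw [measure_eq_zero_iff_ae_notMem]
    simpa only [mem_sphere_zero_iff_norm] using hm
  · rw [measure_eq_zero_iff_ae_notMem]
    filter_upwards [ae_norm_eq_one_surfaceMeasure E] with w hw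
    simpa only [mem_compl_iff, mem_sphere_zero_iff_norm, not_not] using hw

/-- The measure `m + |φ - φ z| σ`: its potential controls the deviation of the potential of
`m + φ σ` from `φ z` times the potential of the surface measure `σ`. -/
noncomputable def deviationMeasure (m : Measure E) (φ : E → ℝ) (z : E) : Measure E :=
  m + (surfaceMeasure E).withDensity fun w => ‖φ w - φ z‖ₑ

lemma ae_one_le_norm_deviationMeasure (hm : ∀ᵐ w ∂m, 1 ≤ ‖w‖) (φ : E → ℝ) (z : E) :
    ∀ᵐ w ∂(deviationMeasure m φ z), 1 ≤ ‖w‖ :=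
  ae_add_measure_iff.2 ⟨hm, (withDensity_absolutelyContinuous _ _).ae_le <|
    (ae_norm_eq_one_surfaceMeasure E).mono fun _ hw => hw.ge⟩

variable [FiniteDimensional ℝ E] [Nontrivial E]

lemma enorm_add_integral_sub_le_distPotential_deviationMeasure (hx : ‖x‖ < 1)
    (hmx : distPotential m x ≠ ∞) (hφ_meas : Measurable φ)
    (hφ : Integrable φ (surfaceMeasure E)) (z : E) :
    ‖(distPotential m x).toReal + ∫ w, (dist x w ^ dim E)⁻¹ * φ w ∂(surfaceMeasure E) -
        φ z * ∫ w, (dist x w ^ dim E)⁻¹ ∂(surfaceMeasure E)‖ₑ ≤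
      distPotential (deviationMeasure m φ z) x := by
  have hker : Integrable (fun w => (dist x w ^ dim E)⁻¹) (surfaceMeasure E) :=
    memLp_one_iff_integrable.1 (memLp_inv_dist_pow hx 1)
  have hkerφ : Integrable (fun w => (dist x w ^ dim E)⁻¹ * φ w) (surfaceMeasure E) := by
    refine hφ.bdd_mul (c := ((1 - ‖x‖) ^ dim E)⁻¹) hker.1 ?_
    filter_upwards [ae_norm_eq_one_surfaceMeasure E] with w hw
    exact norm_inv_dist_pow_le hx hw.ge _
  rw [add_sub_assoc, ← integral_const_mul, ← integral_sub hkerφ (hker.const_mul _),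
    deviationMeasure, distPotential_add]
  refine (enorm_add_le _ _).trans (add_le_add ?_ ?_)
  · rw [Real.enorm_eq_ofReal ENNReal.toReal_nonneg, ENNReal.ofReal_toReal hmx]
  · rw [distPotential, lintegral_withDensity_eq_lintegral_mul _ (by fun_prop) (by fun_prop)]
    refine (enorm_integral_le_lintegral_enorm _).trans_eq (lintegral_congr fun w => ?_)
    have hker_nonneg : 0 ≤ (dist x w ^ dim E)⁻¹ := by positivity
    rw [mul_comm (φ z), ← mul_sub, enorm_mul, Real.enorm_eq_ofReal hker_nonneg, mul_comm,
      Pi.mul_apply]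

lemma exists_le_distPotential_surfaceMeasure (β : ℝ) :
    ∃ k : ℝ, 0 < k ∧ ∀ x z : E, ‖z‖ = 1 → x ∈ approachRegion β z →
      ENNReal.ofReal (k / (1 - ‖x‖)) ≤ distPotential (surfaceMeasure E) x := by
  obtain ⟨k, hk, hball⟩ := exists_le_surfaceMeasure_closedBall (E := E)
  refine ⟨k / (|β| + 1) ^ dim E, by positivity, fun x z hz hx => ?_⟩
  have hδ : 0 < 1 - ‖x‖ := sub_pos.2 hx.1
  set δ := 1 - ‖x‖
  have hβ : β ≤ |β| := le_abs_self β
  calc ENNReal.ofReal (k / (|β| + 1) ^ dim E / δ)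
      = ENNReal.ofReal ((((|β| + 1) * δ) ^ dim E)⁻¹) * (k * ENNReal.ofReal δ ^ (dim E - 1)) := by
        rw [← ENNReal.ofReal_pow hδ.le, ← ENNReal.ofReal_coe_nnreal,
          ← ENNReal.ofReal_mul k.coe_nonneg, ← ENNReal.ofReal_mul (by positivity), mul_pow,
          ← mul_pow_sub_one (Module.finrank_pos (R := ℝ) (M := E)).ne' δ]
        congr 1
        field_simp
    _ ≤ ENNReal.ofReal ((((|β| + 1) * δ) ^ dim E)⁻¹) * surfaceMeasure E (closedBall z δ) := by
        gcongr
        exact hball z hz δ hδ (by linarith [norm_nonneg x])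
    _ ≤ ∫⁻ w in closedBall z δ, ENNReal.ofReal ((dist x w ^ dim E)⁻¹) ∂(surfaceMeasure E) := by
        rw [← setLIntegral_const]
        refine lintegral_mono_ae ?_
        filter_upwards [ae_restrict_mem measurableSet_closedBall,
          ae_restrict_of_ae (ae_norm_eq_one_surfaceMeasure E)] with w hwz hw
        have hpos : 0 < dist x w := hδ.trans_le (sub_norm_le_dist hw.ge)
        have hdist : dist x w ≤ (|β| + 1) * δ := by
          have := dist_triangle_right x w z
          have := mem_closedBall.1 hwz
          nlinarith [hx.2]
        gcongr
    _ ≤ _ := setLIntegral_le_lintegral _ _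

lemma eventually_le_mul_pow_of_tendsto_div_surfaceMeasure (hz : ‖z‖ = 1) {F : ℝ → ℝ≥0∞}
    (hF : Tendsto (fun r => F r / surfaceMeasure E (closedBall z r)) (𝓝[>] 0) (𝓝 0))
    {ε : ℝ≥0∞} (hε : 0 < ε) :
    ∀ᶠ r in 𝓝[>] 0, F r ≤ ε * ENNReal.ofReal r ^ (dim E - 1) := by
  obtain ⟨K, hK⟩ := exists_surfaceMeasure_closedBall_le (E := E)
  obtain ⟨k, hk, hball⟩ := exists_le_surfaceMeasure_closedBall (E := E)
  have hεK : 0 < ε / K := ENNReal.div_pos hε.ne' ENNReal.coe_ne_top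
  filter_upwards [hF.eventually (ge_mem_nhds hεK), Ioc_mem_nhdsGT zero_lt_one] with r hFr hr
  have hne : surfaceMeasure E (closedBall z r) ≠ 0 :=
    ((ENNReal.mul_pos (by simpa using hk)
      (pow_ne_zero _ (ENNReal.ofReal_ne_zero_iff.2 hr.1))).trans_le (hball z hz r hr.1 hr.2)).ne'
  calc F r ≤ ε / K * surfaceMeasure E (closedBall z r) :=
        (ENNReal.div_le_iff hne (measure_ne_top _ _)).1 hFr
    _ ≤ ε / K * (K * ENNReal.ofReal r ^ (dim E - 1)) := by
        gcongr
        exact hK z r hr.1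
    _ ≤ ε * ENNReal.ofReal r ^ (dim E - 1) := by
        rw [← mul_assoc, mul_comm (ε / K)]
        gcongr
        exact ENNReal.mul_div_le

lemma ae_eventually_deviationMeasure_closedBall_le [IsLocallyFiniteMeasure m]
    (hm : m ⟂ₘ surfaceMeasure E) (hφ : Integrable φ (surfaceMeasure E)) :
    ∀ᵐ z ∂(surfaceMeasure E), ∀ ε : ℝ≥0∞, 0 < ε → ∀ᶠ r in 𝓝[>] 0,
      deviationMeasure m φ z (closedBall z r) ≤ ε * ENNReal.ofReal r ^ (dim E - 1) := by
  filter_upwards [ae_norm_eq_one_surfaceMeasure E, hm.rnDeriv_ae_eq_zero,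
    Besicovitch.ae_tendsto_rnDeriv m (surfaceMeasure E),
    (Besicovitch.vitaliFamily (surfaceMeasure E)).ae_tendsto_lintegral_enorm_sub_div_of_integrable
      hφ] with z hz hzero hderiv hlebesgue ε hε
  rw [hzero] at hderiv
  have hsum := hderiv.add (hlebesgue.comp (Besicovitch.tendsto_filterAt (surfaceMeasure E) z))
  rw [Pi.zero_apply, add_zero] at hsum
  refine eventually_le_mul_pow_of_tendsto_div_surfaceMeasure hz (hsum.congr fun r => ?_) hε
  rw [Function.comp_apply, ENNReal.div_add_div_same, deviationMeasure, Measure.add_apply,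
    withDensity_apply _ measurableSet_closedBall]

lemma lintegral_inv_one_add_dist_pow_deviationMeasure_ne_top (hz : ‖z‖ = 1)
    (hm : ∀ᵐ w ∂m, w ≠ 0) (hm0 : distPotential m 0 ≠ ∞) (hφ_meas : Measurable φ)
    (hφ : Integrable φ (surfaceMeasure E)) :
    ∫⁻ w, ENNReal.ofReal ((1 + dist w z) ^ dim E)⁻¹ ∂(deviationMeasure m φ z) ≠ ∞ := by
  have hdev : ∫⁻ w, ‖φ w - φ z‖ₑ ∂(surfaceMeasure E) ≠ ∞ :=
    (hφ.sub (integrable_const (φ z))).2.ne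
  rw [deviationMeasure, lintegral_add_measure,
    lintegral_withDensity_eq_lintegral_mul _ (by fun_prop) (by fun_prop), ENNReal.add_ne_top]
  constructor
  · refine ne_top_of_le_ne_top hm0 (lintegral_mono_ae (hm.mono fun w hw => ?_))
    have hw0 : 0 < dist 0 w := dist_pos.2 hw.symm
    gcongr
    linarith [dist_triangle_right 0 w z, dist_zero_left z]
  · refine ne_top_of_le_ne_top hdev (lintegral_mono fun w => ?_)
    rw [Pi.mul_apply]
    refine mul_le_of_le_one_right' ?_
    rw [← ENNReal.ofReal_one]
    exact ENNReal.ofReal_le_ofReal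
      (inv_le_one_of_one_le₀ (one_le_pow₀ (le_add_of_nonneg_right dist_nonneg)))

lemma edist_div_integral_le (hx : ‖x‖ < 1) (hmx : distPotential m x ≠ ∞)
    (hφ_meas : Measurable φ) (hφ : Integrable φ (surfaceMeasure E)) {k : ℝ} (hk : 0 < k)
    (hlower : ENNReal.ofReal (k / (1 - ‖x‖)) ≤ distPotential (surfaceMeasure E) x) (z : E) :
    edist (((distPotential m x).toReal +
        ∫ w, (dist x w ^ dim E)⁻¹ * φ w ∂(surfaceMeasure E)) /
          ∫ w, (dist x w ^ dim E)⁻¹ ∂(surfaceMeasure E)) (φ z) ≤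
      ENNReal.ofReal ((1 - ‖x‖) / k) * distPotential (deviationMeasure m φ z) x := by
  have hpos : 0 < 1 - ‖x‖ := sub_pos.2 hx
  have hfin : distPotential (surfaceMeasure E) x ≠ ∞ := by
    refine ne_top_of_le_ne_top ?_ (distPotential_le_of_le_dist hpos
      ((ae_norm_eq_one_surfaceMeasure E).mono fun w hw => sub_norm_le_dist hw.ge))
    finiteness
  have hlower_real : k / (1 - ‖x‖) ≤ ∫ w, (dist x w ^ dim E)⁻¹ ∂(surfaceMeasure E) := by
    rwa [integral_inv_dist_pow, ← ENNReal.ofReal_le_iff_le_toReal hfin]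
  set H := ∫ w, (dist x w ^ dim E)⁻¹ ∂(surfaceMeasure E)
  have hH_pos : 0 < H := (div_pos hk hpos).trans_le hlower_real
  rw [edist_eq_enorm_sub, div_sub' hH_pos.ne', div_eq_inv_mul, enorm_mul, mul_comm H]
  gcongr
  · rw [Real.enorm_eq_ofReal (inv_nonneg.2 hH_pos.le), ← inv_div]
    gcongr
  · exact enorm_add_integral_sub_le_distPotential_deviationMeasure hx hmx hφ_meas hφ z

lemma ae_tendsto_add_integral_div_integral (hm : ∀ᵐ w ∂m, 1 < ‖w‖)
    (hm_fin : ∀ x : E, ‖x‖ < 1 → distPotential m x ≠ ∞) (hφ_meas : Measurable φ)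
    (hφ : Integrable φ (surfaceMeasure E)) :
    ∀ᵐ z ∂(surfaceMeasure E), ∀ β : ℝ, Tendsto (fun x => ((distPotential m x).toReal +
        ∫ w, (dist x w ^ dim E)⁻¹ * φ w ∂(surfaceMeasure E)) /
          ∫ w, (dist x w ^ dim E)⁻¹ ∂(surfaceMeasure E)) (𝓝[approachRegion β z] z) (𝓝 (φ z)) := by
  have hm0 : distPotential m 0 ≠ ∞ := hm_fin 0 (by simp)
  have hm_ne : ∀ᵐ w ∂m, w ≠ 0 := hm.mono fun w hw => norm_pos_iff.1 (one_pos.trans hw)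
  have := isLocallyFiniteMeasure_of_distPotential_zero_ne_top hm_ne hm0
  filter_upwards [ae_norm_eq_one_surfaceMeasure E, ae_eventually_deviationMeasure_closedBall_le
    (mutuallySingular_surfaceMeasure (hm.mono fun w hw => hw.ne')) hφ] with z hz hdens β
  obtain ⟨k, hk, hlower⟩ := exists_le_distPotential_surfaceMeasure (E := E) β
  have hvanish := (tendsto_mul_lintegral_inv_add_dist_pow_zero Module.finrank_pos.ne'
    (lintegral_inv_one_add_dist_pow_deviationMeasure_ne_top hz hm_ne hm0 hφ_meas hφ) hdens).comp
    (tendsto_one_sub_norm_approachRegion β hz)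
  have hbound := ENNReal.Tendsto.const_mul (a := ENNReal.ofReal ((2 + β) ^ dim E / k)) hvanish
    (Or.inr ENNReal.ofReal_ne_top)
  rw [mul_zero] at hbound
  rw [tendsto_iff_edist_tendsto_0]
  refine tendsto_of_tendsto_of_tendsto_of_le_of_le' tendsto_const_nhds hbound
    (Eventually.of_forall fun _ => zero_le) ?_
  filter_upwards [eventually_mem_nhdsWithin] with x hx
  have hpos : 0 < 1 - ‖x‖ := sub_pos.2 hx.1
  have hβ : 0 < β := pos_of_mul_pos_left (dist_nonneg.trans_lt hx.2) hpos.le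
  refine (edist_div_integral_le hx.1 (hm_fin x hx.1) hφ_meas hφ hk (hlower x z hz hx) z).trans ?_
  refine (mul_le_mul_right (distPotential_le_of_mem_approachRegion hx
    (ae_one_le_norm_deviationMeasure (hm.mono fun w hw => hw.le) φ z)) _).trans_eq ?_
  rw [Function.comp_apply, ← mul_assoc, ← mul_assoc, ← ENNReal.ofReal_mul (by positivity),
    ← ENNReal.ofReal_mul (by positivity)]
  congr 2
  ring

end Fatou

section MainTheorem

variable {n : ℕ} {α : ℝ}

local notation "𝔼" => EuclideanSpace ℝ (Fin n)

lemma stolzSet_subset_approachRegion (β : ℝ) (z : 𝔼) : stolzSet n β z ⊆ approachRegion β z :=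
  fun _ hx => ⟨mem_ball_zero_iff.1 hx.1, hx.2.2⟩

lemma ae_tendsto_div_integral_martinKernel [NeZero n] (hα : α ∈ Ioo (0 : ℝ) 2) {u φ : 𝔼 → ℝ}
    (hu : IsAlphaHarmonic n α (ball 0 1) u) (hφ_meas : Measurable φ)
    (hφ : Integrable φ (surfaceMeasure 𝔼))
    (hrep : ∀ x : 𝔼, ‖x‖ < 1 →
      singularPart α u x = ∫ w, martinKernel n α x w * φ w ∂(surfaceMeasure 𝔼)) :
    ∀ᵐ z ∂(surfaceMeasure 𝔼), ∀ β : ℝ,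
      Tendsto (fun x => u x / ∫ w, martinKernel n α x w ∂(surfaceMeasure 𝔼))
        (𝓝[stolzSet n β z] z) (𝓝 (φ z)) := by
  filter_upwards [ae_tendsto_add_integral_div_integral
    (ae_mem_sweepMeasure α 1 (measurableSet_exterior 1) u)
    (fun x hx => distPotential_exterior_ne_top hα hu hx) hφ_meas hφ] with z hlim β
  refine ((hlim β).mono_left (nhdsWithin_mono z (stolzSet_subset_approachRegion β z))).congr' ?_
  filter_upwards [eventually_mem_nhdsWithin] with x hx
  have hx1 : ‖x‖ < 1 := mem_ball_zero_iff.1 hx.1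
  have hfactor : 0 < (1 ^ 2 - ‖x‖ ^ 2) ^ (α / 2) :=
    Real.rpow_pos_of_pos (by nlinarith [norm_nonneg x]) _
  have hux : u x = poissonIntegral α u x + singularPart α u x :=
    (add_sub_cancel (poissonIntegral α u x) (u x)).symm
  rw [hux, hrep x hx1, poissonIntegral_eq_mul_toReal_distPotential hα hu hx1]
  simp_rw [martinKernel_eq_mul_inv_dist_pow, mul_assoc, integral_const_mul]
  rw [← mul_add, mul_div_mul_left _ _ hfactor.ne']

end MainTheorem

theorem stmt16_general (n : ℕ) (hn : n ≠ 0) (α : ℝ) (hα : α ∈ Set.Ioo (0 : ℝ) 2)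
    (u : EuclideanSpace ℝ (Fin n) → ℝ)
    (hu : IsAlphaHarmonic n α (ball (0 : EuclideanSpace ℝ (Fin n)) 1) u) (c : ℝ)
    (hbd : ∀ x ∈ ball (0 : EuclideanSpace ℝ (Fin n)) 1,
      0 ≤ u x - (∫ v in {v : EuclideanSpace ℝ (Fin n) | 1 < ‖v‖},
          stablePoissonKernel n α 0 1 x v * u v) ∧
      u x - (∫ v in {v : EuclideanSpace ℝ (Fin n) | 1 < ‖v‖},
          stablePoissonKernel n α 0 1 x v * u v) ≤ c * (1 - ‖x‖) ^ (α / 2 - 1)) :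
    ∃ φ : EuclideanSpace ℝ (Fin n) → ℝ, Measurable φ ∧ (∀ w, 0 ≤ φ w) ∧
      (∀ᵐ z ∂(μH[(n : ℝ) - 1].restrict (sphere (0 : EuclideanSpace ℝ (Fin n)) 1)),
        ∀ β : ℝ, 1 < β →
          Tendsto (fun x => u x /
              ∫ w in sphere (0 : EuclideanSpace ℝ (Fin n)) 1,
                martinKernel n α x w ∂μH[(n : ℝ) - 1])
            (nhdsWithin z (stolzSet n β z)) (nhds (φ z))) ∧
      (∀ x ∈ ball (0 : EuclideanSpace ℝ (Fin n)) 1,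
        u x = (∫ v in {v : EuclideanSpace ℝ (Fin n) | 1 < ‖v‖},
            stablePoissonKernel n α 0 1 x v * u v) +
          ∫ w in sphere (0 : EuclideanSpace ℝ (Fin n)) 1,
            martinKernel n α x w * φ w ∂μH[(n : ℝ) - 1]) := by
  have : NeZero n := ⟨hn⟩
  obtain ⟨φ, hφ_meas, hφ_nonneg, hφ_int, hrep⟩ := exists_singularPart_eq_integral_martinKernel
    hα hu (fun x hx => (hbd x hx).1) fun x hx => (hbd x hx).2
  have hlim := ae_tendsto_div_integral_martinKernel hα hu hφ_meas hφ_int hrep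
  simp only [surfaceMeasure, finrank_euclideanSpace_fin] at hrep hlim
  refine ⟨φ, hφ_meas, hφ_nonneg, hlim.mono fun z hz β _ => hz β, fun x hx => ?_⟩
  exact sub_eq_iff_eq_add'.1 (hrep x (mem_ball_zero_iff.1 hx))

/-- let `σ` be the surface measure on the unit sphere, `u` positive
α-harmonic in `B` with `0 ≤ u(x) − ∫_{|v|>1} P(x,v)u(v)dv ≤ c (1−|x|)^{α/2−1}`, and
`h(x) = ∫_S M(x,w) σ(dw)`. Then there is a Borel `φ : S → [0,∞)` which is the
nontangential limit of `u/h` σ-a.e., and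
`u(x) = ∫_{|v|>1} P(x,v)u(v)dv + ∫_S M(x,w) φ(w) σ(dw)` on `B`. -/
theorem stmt16 (n : ℕ) (hn : 2 ≤ n) (α : ℝ) (hα : α ∈ Set.Ioo (0 : ℝ) 2)
    (u : EuclideanSpace ℝ (Fin n) → ℝ)
    (hu : IsAlphaHarmonic n α (ball (0 : EuclideanSpace ℝ (Fin n)) 1) u)
    (hupos : ∀ x ∈ ball (0 : EuclideanSpace ℝ (Fin n)) 1, 0 < u x)
    (c : ℝ) (hc : 0 < c)
    (hbd : ∀ x ∈ ball (0 : EuclideanSpace ℝ (Fin n)) 1,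
      0 ≤ u x - (∫ v in {v : EuclideanSpace ℝ (Fin n) | 1 < ‖v‖},
          stablePoissonKernel n α 0 1 x v * u v) ∧
      u x - (∫ v in {v : EuclideanSpace ℝ (Fin n) | 1 < ‖v‖},
          stablePoissonKernel n α 0 1 x v * u v) ≤ c * (1 - ‖x‖) ^ (α / 2 - 1)) :
    ∃ φ : EuclideanSpace ℝ (Fin n) → ℝ, Measurable φ ∧ (∀ w, 0 ≤ φ w) ∧
      (∀ᵐ z ∂(μH[(n : ℝ) - 1].restrict (sphere (0 : EuclideanSpace ℝ (Fin n)) 1)),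
        ∀ β : ℝ, 1 < β →
          Tendsto (fun x => u x /
              ∫ w in sphere (0 : EuclideanSpace ℝ (Fin n)) 1,
                martinKernel n α x w ∂μH[(n : ℝ) - 1])
            (nhdsWithin z (stolzSet n β z)) (nhds (φ z))) ∧
      (∀ x ∈ ball (0 : EuclideanSpace ℝ (Fin n)) 1,
        u x = (∫ v in {v : EuclideanSpace ℝ (Fin n) | 1 < ‖v‖},
            stablePoissonKernel n α 0 1 x v * u v) +
          ∫ w in sphere (0 : EuclideanSpace ℝ (Fin n)) 1,
            martinKernel n α x w * φ w ∂μH[(n : ℝ) - 1]) :=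
  stmt16_general n (by lia) α hα u hu c hbd
end

section
/- Let n ≥ 2, α ∈ (0,2), let ν be a nonzero finite Borel measure on the unit sphere S ⊆ ℝⁿ, and define h(x) := ∫_S M(x,w) ν(dw) for x in the open unit ball B. Then there exists a ν-null Borel set N ⊆ S such that for every z ∈ S ∖ N, every y ∈ B, and every β > 1, the limit of g_y(x)/h(x) as x → z with x ∈ A^β_z exists; the exceptional null set N is independent of y. -/
open Metric Set MeasureTheory Filter

/-- `g_y(x) = |x−y|^{α−n} ∫₀^{w(x,y)} s^{α/2−1} (1+s)^{−n/2} ds` with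
`w(x,y) = (1−|x|²)(1−|y|²)/|x−y|²`; up to a positive constant, the Green function of
the unit ball for the symmetric α-stable process. -/
noncomputable def greenFn (n : ℕ) (α : ℝ) (y x : EuclideanSpace ℝ (Fin n)) : ℝ :=
  dist x y ^ (α - (n : ℝ)) *
    ∫ s in (0 : ℝ)..((1 - ‖x‖ ^ 2) * (1 - ‖y‖ ^ 2) / dist x y ^ 2),
      s ^ (α / 2 - 1) * (1 + s) ^ (-(n : ℝ) / 2)

/-!
Lebesgue measure is singular to `ν`, so differentiating it with respect to `ν` shows that
`ν (B(z, r)) / rⁿ → ∞` as `r → 0` for `ν`-almost every `z`. On `A^β_z` every point of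
`B(z, 1 - |x|)` lies within `(β + 1) (1 - |x|)` of `x`, so Markov's inequality bounds
`h(x) / (1 - |x|²)^{α/2}` below by a constant times `ν (B(z, r)) / rⁿ` with `r = 1 - |x|`. Since
`g_y(x) = O((1 - |x|²)^{α/2})` near `z`, the limit of `g_y / h` is `0` for every `y` at all
such `z`.
-/

open Module
open scoped Topology Asymptotics

section Density

theorem ae_tendsto_measure_closedBall_div_nhds_top {X : Type*} [MetricSpace X]
    [SecondCountableTopology X] [MeasurableSpace X] [BorelSpace X] [HasBesicovitchCovering X]
    {μ ν : Measure X} [μ.IsOpenPosMeasure] [IsLocallyFiniteMeasure μ] [IsLocallyFiniteMeasure ν]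
    (hμν : μ.MutuallySingular ν) :
    ∀ᵐ z ∂ν, Tendsto (fun r => ν (closedBall z r) / μ (closedBall z r)) (𝓝[>] 0) (𝓝 ⊤) := by
  filter_upwards [Besicovitch.ae_tendsto_rnDeriv μ ν, (Measure.rnDeriv_eq_zero μ ν).2 hμν]
    with z hz hz_zero
  rw [hz_zero, Pi.zero_apply] at hz
  have hfinite : ∀ᶠ r in 𝓝[>] (0 : ℝ), ν (closedBall z r) < ⊤ :=
    ((tendsto_closedBall_smallSets z).mono_left nhdsWithin_le_nhds).eventually
      (ν.finiteAt_nhds z).eventually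
  have hinv := hz.inv
  rw [ENNReal.inv_zero] at hinv
  refine hinv.congr' ?_
  filter_upwards [hfinite, self_mem_nhdsWithin] with r hνr hr
  exact ENNReal.inv_div (.inl hνr.ne) (.inr (measure_closedBall_pos μ z hr).ne')

theorem ae_tendsto_measureReal_closedBall_div_pow_atTop {E : Type*} [NormedAddCommGroup E]
    [NormedSpace ℝ E] [FiniteDimensional ℝ E] [MeasurableSpace E] [BorelSpace E]
    {μ ν : Measure E} [μ.IsAddHaarMeasure] [IsLocallyFiniteMeasure ν]
    (hμν : μ.MutuallySingular ν) :
    ∀ᵐ z ∂ν, Tendsto (fun r => ν.real (closedBall z r) / r ^ finrank ℝ E) (𝓝[>] 0) atTop := by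
  have := FiniteDimensional.proper_real E
  filter_upwards [ae_tendsto_measure_closedBall_div_nhds_top hμν] with z hz
  have hunit : 0 < μ.real (ball 0 1) :=
    ENNReal.toReal_pos (measure_ball_pos μ 0 one_pos).ne' measure_ball_lt_top.ne
  have hratio : Tendsto (fun r => ν.real (closedBall z r) / μ.real (closedBall z r))
      (𝓝[>] 0) atTop := by
    refine ENNReal.tendsto_ofReal_nhds_top.1 (hz.congr' ?_)
    filter_upwards [self_mem_nhdsWithin] with r hr
    have hμr : μ (closedBall z r) ≠ 0 := (measure_closedBall_pos μ z hr).ne'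
    rw [measureReal_def, measureReal_def, ← ENNReal.toReal_div, ENNReal.ofReal_toReal
      (ENNReal.div_ne_top measure_closedBall_lt_top.ne hμr)]
  refine (hratio.const_mul_atTop hunit).congr' ?_
  filter_upwards [self_mem_nhdsWithin] with r hr
  rw [μ.addHaar_real_closedBall z (le_of_lt hr)]
  field_simp

end Density

section DistPower

variable {X : Type*} [PseudoMetricSpace X] [MeasurableSpace X] [OpensMeasurableSpace X]
  {ν : Measure X} [IsFiniteMeasure ν] {x : X} {ε p : ℝ}

theorem integrable_dist_rpow_of_nonpos (hp : p ≤ 0) (hε : 0 < ε)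
    (hdist : ∀ᵐ w ∂ν, ε ≤ dist x w) : Integrable (fun w => dist x w ^ p) ν := by
  refine Integrable.of_bound (C := ε ^ p) ?_ ?_
  · exact ((continuous_const.dist continuous_id).measurable.pow_const p).aestronglyMeasurable
  · filter_upwards [hdist] with w hw
    rw [Real.norm_of_nonneg (by positivity)]
    exact Real.rpow_le_rpow_of_nonpos hε hw hp

theorem rpow_mul_measureReal_closedBall_le_integral_dist_rpow (hp : p ≤ 0) (hε : 0 < ε)
    (hdist : ∀ᵐ w ∂ν, ε ≤ dist x w) (z : X) {r : ℝ} (hr : 0 ≤ r) :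
    (dist x z + r) ^ p * ν.real (closedBall z r) ≤ ∫ w, dist x w ^ p ∂ν := by
  have hsubset : closedBall z r ≤ᵐ[ν] {w | (dist x z + r) ^ p ≤ dist x w ^ p} := by
    filter_upwards [hdist] with w hw (hwz : dist w z ≤ r)
    refine Real.rpow_le_rpow_of_nonpos (hε.trans_le hw) ?_ hp
    linarith [dist_triangle x z w, dist_comm w z]
  have hball_le : ν.real (closedBall z r) ≤ ν.real {w | (dist x z + r) ^ p ≤ dist x w ^ p} :=
    ENNReal.toReal_mono (measure_ne_top ν _) (measure_mono_ae hsubset)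
  calc (dist x z + r) ^ p * ν.real (closedBall z r)
      ≤ (dist x z + r) ^ p * ν.real {w | (dist x z + r) ^ p ≤ dist x w ^ p} :=
        mul_le_mul_of_nonneg_left hball_le (by positivity)
    _ ≤ ∫ w, dist x w ^ p ∂ν :=
        mul_meas_ge_le_integral_of_nonneg (.of_forall fun w => by positivity)
          (integrable_dist_rpow_of_nonpos hp hε hdist) _

end DistPower

section Green

theorem integral_rpow_mul_one_add_rpow_nonneg {a b t : ℝ} (ht : 0 ≤ t) :
    0 ≤ ∫ s in (0 : ℝ)..t, s ^ a * (1 + s) ^ b := by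
  refine intervalIntegral.integral_nonneg ht fun s hs => ?_
  have hs_nonneg : 0 ≤ s := hs.1
  positivity

theorem integral_rpow_mul_one_add_rpow_le {a b t : ℝ} (ha : -1 < a) (hb : b ≤ 0) (ht : 0 ≤ t) :
    ∫ s in (0 : ℝ)..t, s ^ a * (1 + s) ^ b ≤ t ^ (a + 1) / (a + 1) := by
  have hrpow : IntervalIntegrable (fun s : ℝ => s ^ a) volume 0 t :=
    intervalIntegral.intervalIntegrable_rpow' ha
  have hcont : ContinuousOn (fun s : ℝ => (1 + s) ^ b) (uIcc 0 t) := by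
    rw [uIcc_of_le ht]
    exact ContinuousOn.rpow_const (by fun_prop) fun s hs => .inl (by linarith [hs.1])
  calc ∫ s in (0 : ℝ)..t, s ^ a * (1 + s) ^ b
      ≤ ∫ s in (0 : ℝ)..t, s ^ a := by
        refine intervalIntegral.integral_mono_on ht (hrpow.mul_continuousOn hcont) hrpow
          fun s hs => ?_
        exact mul_le_of_le_one_right (Real.rpow_nonneg hs.1 a)
          (Real.rpow_le_one_of_one_le_of_nonpos (by linarith [hs.1]) hb)
    _ = t ^ (a + 1) / (a + 1) := by
        rw [integral_rpow (.inl ha), Real.zero_rpow (by linarith), sub_zero]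

variable {n : ℕ} {α : ℝ} {x y z : EuclideanSpace ℝ (Fin n)}

theorem greenFn_nonneg (hx : ‖x‖ ≤ 1) (hy : ‖y‖ ≤ 1) : 0 ≤ greenFn n α y x := by
  have hx_sq : 0 ≤ 1 - ‖x‖ ^ 2 := sub_nonneg.2 (pow_le_one₀ (norm_nonneg x) hx)
  have hy_sq : 0 ≤ 1 - ‖y‖ ^ 2 := sub_nonneg.2 (pow_le_one₀ (norm_nonneg y) hy)
  exact mul_nonneg (by positivity) (integral_rpow_mul_one_add_rpow_nonneg (by positivity))

theorem greenFn_le (hα : 0 < α) (hx : ‖x‖ ≤ 1) (hy : ‖y‖ ≤ 1) (hxy : x ≠ y) :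
    greenFn n α y x ≤
      2 / α * (1 - ‖y‖ ^ 2) ^ (α / 2) * dist x y ^ (-(n : ℝ)) * (1 - ‖x‖ ^ 2) ^ (α / 2) := by
  have hx_sq : 0 ≤ 1 - ‖x‖ ^ 2 := sub_nonneg.2 (pow_le_one₀ (norm_nonneg x) hx)
  have hy_sq : 0 ≤ 1 - ‖y‖ ^ 2 := sub_nonneg.2 (pow_le_one₀ (norm_nonneg y) hy)
  have hd : 0 < dist x y := dist_pos.2 hxy
  have hdα : (dist x y ^ 2) ^ (α / 2) = dist x y ^ α := by
    rw [← Real.rpow_natCast_mul hd.le, Nat.cast_ofNat, mul_div_cancel₀ α two_ne_zero]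
  have hintegral := integral_rpow_mul_one_add_rpow_le (a := α / 2 - 1) (b := -(n : ℝ) / 2)
    (t := (1 - ‖x‖ ^ 2) * (1 - ‖y‖ ^ 2) / dist x y ^ 2) (by linarith)
    (div_nonpos_of_nonpos_of_nonneg (by simp) zero_le_two) (by positivity)
  rw [sub_add_cancel] at hintegral
  calc greenFn n α y x
      ≤ dist x y ^ (α - (n : ℝ)) *
          (((1 - ‖x‖ ^ 2) * (1 - ‖y‖ ^ 2) / dist x y ^ 2) ^ (α / 2) / (α / 2)) :=
        mul_le_mul_of_nonneg_left hintegral (by positivity)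
    _ = _ := by
        rw [Real.div_rpow (by positivity) (by positivity), Real.mul_rpow hx_sq hy_sq, hdα,
          sub_eq_add_neg, Real.rpow_add hd]
        field_simp

theorem greenFn_isBigO (hα : 0 < α) (hy : ‖y‖ ≤ 1) (hzy : z ≠ y) :
    greenFn n α y =O[𝓝[closedBall 0 1] z] fun x => (1 - ‖x‖ ^ 2) ^ (α / 2) := by
  have hcoeff : (fun x => 2 / α * (1 - ‖y‖ ^ 2) ^ (α / 2) * dist x y ^ (-(n : ℝ)))
      =O[𝓝[closedBall 0 1] z] fun _ => (1 : ℝ) := by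
    have hdist : Tendsto (fun x => dist x y) (𝓝[closedBall 0 1] z) (𝓝 (dist z y)) :=
      (continuous_id.dist continuous_const).continuousWithinAt
    exact ((hdist.rpow_const (.inl (dist_ne_zero.2 hzy))).const_mul _).isBigO_one ℝ
  have hbound : ∀ᶠ x in 𝓝[closedBall 0 1] z, ‖greenFn n α y x‖ ≤
      ‖2 / α * (1 - ‖y‖ ^ 2) ^ (α / 2) * dist x y ^ (-(n : ℝ)) * (1 - ‖x‖ ^ 2) ^ (α / 2)‖ := by
    filter_upwards [self_mem_nhdsWithin, nhdsWithin_le_nhds (isOpen_ne.mem_nhds hzy)]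
      with x hx hxy
    have hx_norm : ‖x‖ ≤ 1 := mem_closedBall_zero_iff.1 hx
    rw [Real.norm_of_nonneg (greenFn_nonneg hx_norm hy)]
    exact (greenFn_le hα hx_norm hy hxy).trans (le_abs_self _)
  simpa only [one_mul] using
    (Asymptotics.IsBigO.of_bound' hbound).trans (hcoeff.mul (Asymptotics.isBigO_refl _ _))

end Green

section Martin

variable {n : ℕ} {α β : ℝ} {x z : EuclideanSpace ℝ (Fin n)}
  {ν : Measure (EuclideanSpace ℝ (Fin n))} [IsFiniteMeasure ν]

theorem measureReal_closedBall_div_pow_le_integral_martinKernel_div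
    (hν : ∀ᵐ w ∂ν, 1 ≤ ‖w‖) (hx : x ∈ stolzSet n β z) :
    ν.real (closedBall z (1 - ‖x‖)) / (1 - ‖x‖) ^ n ≤
      (β + 1) ^ n * ((∫ w, martinKernel n α x w ∂ν) / (1 - ‖x‖ ^ 2) ^ (α / 2)) := by
  obtain ⟨hx_ball, -, hxz⟩ := hx
  rw [mem_ball_zero_iff] at hx_ball
  have hr : 0 < 1 - ‖x‖ := sub_pos.2 hx_ball
  have hweight : 0 < (1 - ‖x‖ ^ 2) ^ (α / 2) :=
    Real.rpow_pos_of_pos (sub_pos.2 (pow_lt_one₀ (norm_nonneg x) hx_ball two_ne_zero)) _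
  have hsum_pos : 0 < dist x z + (1 - ‖x‖) := by positivity
  have hsum_le : dist x z + (1 - ‖x‖) ≤ (β + 1) * (1 - ‖x‖) := by linarith
  have hdist : ∀ᵐ w ∂ν, 1 - ‖x‖ ≤ dist x w := by
    filter_upwards [hν] with w hw
    rw [dist_eq_norm']
    linarith [norm_sub_norm_le w x]
  have hmarkov := rpow_mul_measureReal_closedBall_le_integral_dist_rpow
    (neg_nonpos.2 n.cast_nonneg) hr hdist z hr.le
  simp only [martinKernel, integral_const_mul]
  rw [mul_div_cancel_left₀ _ hweight.ne', div_le_iff₀ (by positivity)]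
  rw [Real.rpow_neg hsum_pos.le, Real.rpow_natCast, inv_mul_le_iff₀ (by positivity)] at hmarkov
  calc ν.real (closedBall z (1 - ‖x‖))
      ≤ (dist x z + (1 - ‖x‖)) ^ n * ∫ w, dist x w ^ (-(n : ℝ)) ∂ν := hmarkov
    _ ≤ ((β + 1) * (1 - ‖x‖)) ^ n * ∫ w, dist x w ^ (-(n : ℝ)) ∂ν := by gcongr
    _ = _ := by rw [mul_pow]; ring

theorem tendsto_one_sub_norm_stolzSet (hz : ‖z‖ = 1) :
    Tendsto (fun x => 1 - ‖x‖) (𝓝[stolzSet n β z] z) (𝓝[>] 0) := by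
  refine tendsto_nhdsWithin_of_tendsto_nhds_of_eventually_within _ ?_ ?_
  · have hcont : ContinuousWithinAt (fun x => 1 - ‖x‖) (stolzSet n β z) z := by fun_prop
    simpa only [ContinuousWithinAt, hz, sub_self] using hcont
  · filter_upwards [self_mem_nhdsWithin] with x hx
    exact sub_pos.2 (mem_ball_zero_iff.1 hx.1)

theorem tendsto_integral_martinKernel_div_atTop (hν : ∀ᵐ w ∂ν, 1 ≤ ‖w‖) (hz : ‖z‖ = 1) (hβ : 1 < β)
    (hdensity : Tendsto (fun r => ν.real (closedBall z r) / r ^ n) (𝓝[>] 0) atTop) :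
    Tendsto (fun x => (∫ w, martinKernel n α x w ∂ν) / (1 - ‖x‖ ^ 2) ^ (α / 2))
      (𝓝[stolzSet n β z] z) atTop := by
  refine Tendsto.atTop_of_const_mul₀ (pow_pos (by linarith : 0 < β + 1) n) ?_
  refine tendsto_atTop_mono' _ ?_ (hdensity.comp (tendsto_one_sub_norm_stolzSet hz))
  filter_upwards [self_mem_nhdsWithin] with x hx
  exact measureReal_closedBall_div_pow_le_integral_martinKernel_div hν hx

theorem rpow_one_sub_norm_sq_isLittleO_integral_martinKernel (hν : ∀ᵐ w ∂ν, 1 ≤ ‖w‖)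
    (hz : ‖z‖ = 1) (hβ : 1 < β)
    (hdensity : Tendsto (fun r => ν.real (closedBall z r) / r ^ n) (𝓝[>] 0) atTop) :
    (fun x => (1 - ‖x‖ ^ 2) ^ (α / 2)) =o[𝓝[stolzSet n β z] z]
      fun x => ∫ w, martinKernel n α x w ∂ν := by
  have hratio := tendsto_integral_martinKernel_div_atTop (α := α) hν hz hβ hdensity
  refine Asymptotics.isLittleO_of_tendsto' ?_ (by simpa [Pi.inv_def] using hratio.inv_tendsto_atTop)
  filter_upwards [hratio.eventually_gt_atTop 0] with x hx hzero
  simp [hzero] at hx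

end Martin

theorem stmt17_general (n : ℕ) (α : ℝ) (hα : 0 < α)
    (ν : Measure (EuclideanSpace ℝ (Fin n))) [IsFiniteMeasure ν]
    (hνS : ν (sphere (0 : EuclideanSpace ℝ (Fin n)) 1)ᶜ = 0) :
    ∃ N : Set (EuclideanSpace ℝ (Fin n)),
      N ⊆ sphere (0 : EuclideanSpace ℝ (Fin n)) 1 ∧ MeasurableSet N ∧ ν N = 0 ∧
      ∀ z ∈ sphere (0 : EuclideanSpace ℝ (Fin n)) 1 \ N,
        ∀ y ∈ ball (0 : EuclideanSpace ℝ (Fin n)) 1, ∀ β : ℝ, 1 < β →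
          Tendsto (fun x => greenFn n α y x / ∫ w, martinKernel n α x w ∂ν)
            (𝓝[stolzSet n β z] z) (𝓝 0) := by
  have hsingular : (volume : Measure (EuclideanSpace ℝ (Fin n))).MutuallySingular ν :=
    ⟨sphere 0 1, isClosed_sphere.measurableSet,
      Measure.addHaar_sphere_of_ne_zero _ 0 one_ne_zero, hνS⟩
  have hν : ∀ᵐ w ∂ν, 1 ≤ ‖w‖ := by
    filter_upwards [mem_ae_iff.2 hνS] with w hw
    exact (mem_sphere_zero_iff_norm.1 hw).ge
  obtain ⟨T, hT, hT_meas, hT_null⟩ := exists_measurable_superset_of_null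
    (ae_iff.1 (ae_tendsto_measureReal_closedBall_div_pow_atTop hsingular))
  refine ⟨sphere 0 1 ∩ T, inter_subset_left, isClosed_sphere.measurableSet.inter hT_meas,
    measure_mono_null inter_subset_right hT_null, fun z ⟨hz, hzN⟩ y hy β hβ => ?_⟩
  have hz_norm : ‖z‖ = 1 := mem_sphere_zero_iff_norm.1 hz
  have hy_norm : ‖y‖ < 1 := mem_ball_zero_iff.1 hy
  have hdensity : Tendsto (fun r => ν.real (closedBall z r) / r ^ n) (𝓝[>] 0) atTop := by
    simpa only [finrank_euclideanSpace_fin] using not_not.1 fun h => hzN ⟨hz, hT h⟩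
  have hgreen := greenFn_isBigO hα hy_norm.le (z := z) (by rintro rfl; linarith)
  have hstolz : stolzSet n β z ⊆ closedBall 0 1 := fun x hx => ball_subset_closedBall hx.1
  exact ((hgreen.mono (nhdsWithin_mono z hstolz)).trans_isLittleO
    (rpow_one_sub_norm_sq_isLittleO_integral_martinKernel
      hν hz_norm hβ hdensity)).tendsto_div_nhds_zero

/-- with `h(x) = ∫_S M(x,w) ν(dw)` for a nonzero finite Borel measure
`ν` on the unit sphere, there is a ν-null Borel set `N ⊆ S` such that for every
`z ∈ S ∖ N`, every `y ∈ B` and every `β > 1`, the nontangential limit of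
`g_y(x)/h(x)` at `z` along `A^β_z` exists; the null set `N` is independent of `y`. -/
theorem stmt17 (n : ℕ) (hn : 2 ≤ n) (α : ℝ) (hα : α ∈ Set.Ioo (0 : ℝ) 2)
    (ν : Measure (EuclideanSpace ℝ (Fin n))) [IsFiniteMeasure ν] (hν : ν ≠ 0)
    (hνS : ν (sphere (0 : EuclideanSpace ℝ (Fin n)) 1)ᶜ = 0) :
    ∃ N : Set (EuclideanSpace ℝ (Fin n)),
      N ⊆ sphere (0 : EuclideanSpace ℝ (Fin n)) 1 ∧ MeasurableSet N ∧ ν N = 0 ∧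
      ∀ z ∈ sphere (0 : EuclideanSpace ℝ (Fin n)) 1 \ N,
        ∀ y ∈ ball (0 : EuclideanSpace ℝ (Fin n)) 1,
          ∀ β : ℝ, 1 < β → ∃ L : ℝ,
            Tendsto (fun x => greenFn n α y x / ∫ w, martinKernel n α x w ∂ν)
              (nhdsWithin z (stolzSet n β z)) (nhds L) := by
  obtain ⟨N, hNS, hN_meas, hN_null, hlim⟩ := stmt17_general n α hα.1 ν hνS
  exact ⟨N, hNS, hN_meas, hN_null, fun z hz y hy β hβ => ⟨0, hlim z hz y hy β hβ⟩⟩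
end
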